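/- arXiv:math/9807165 — 7 statements merged into one kernel-verified Lean document; each statement's English description precedes it below -/
import Mathlib

section
/- If T₁, …, Tₙ (with n ≥ 2) is an asteroidal collection of subtrees of a finite tree T, then T has at least n leaves (vertices of degree 1). -/
/-- A subtree representation of a digraph with edge relation `E` on vertex type `V`
in a host graph `T` on vertex type `W`: each digraph vertex `v` gets a source set
`src v` and a sink set `snk v`, each inducing a connected (hence nonempty) subgraph
of `T`, such that `E u v` holds iff `src u` meets `snk v`. -/
structure SubtreeRep {V W : Type} (E : V → V → Prop) (T : SimpleGraph W) where
  src : V → Set W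
  snk : V → Set W
  src_connected : ∀ v, (T.induce (src v)).Connected
  snk_connected : ∀ v, (T.induce (snk v)).Connected
  rep : ∀ u v, E u v ↔ (src u ∩ snk v).Nonempty

/-- The set of leaves (vertices of degree 1) of a graph. -/
def treeLeaves {W : Type} (T : SimpleGraph W) : Set W :=
  {w | (T.neighborSet w).ncard = 1}

/-- The leafage of a digraph: the minimum number of leaves of a finite host tree in
which the digraph has a subtree representation. -/
noncomputable def digLeafage {V : Type} (E : V → V → Prop) : ℕ :=
  sInf {k | ∃ (W : Type) (_ : Fintype W) (T : SimpleGraph W),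
    T.IsTree ∧ Nonempty (SubtreeRep E T) ∧ (treeLeaves T).ncard = k}

/-- The catch leafage of a digraph: the minimum number of leaves of a finite host tree
in which the digraph has a subtree representation all of whose sink sets are single
vertices. -/
noncomputable def catchLeafage {V : Type} (E : V → V → Prop) : ℕ :=
  sInf {k | ∃ (W : Type) (_ : Fintype W) (T : SimpleGraph W) (R : SubtreeRep E T),
    T.IsTree ∧ (∀ v, ∃ x, R.snk v = {x}) ∧ (treeLeaves T).ncard = k}

/-- `C` is between `A` and `B` in `T`: `A` and `B` are disjoint and the unique path of
`T` from `A` to `B` (i.e. the path meeting `A` only at its first vertex and `B` only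
at its last vertex) contains a vertex of `C` (possibly an endpoint). -/
def Between {W : Type} (T : SimpleGraph W) (A B C : Set W) : Prop :=
  A ∩ B = ∅ ∧ ∃ (a b : W) (p : T.Walk a b), a ∈ A ∧ b ∈ B ∧ p.IsPath ∧
    (∀ x ∈ p.support, x ∈ A → x = a) ∧ (∀ x ∈ p.support, x ∈ B → x = b) ∧
    ∃ x ∈ C, x ∈ p.support

/-- An asteroidal collection of sets in `T`: pairwise disjoint, and no member is
between two other members. -/
def Asteroidal {W ι : Type} (T : SimpleGraph W) (F : ι → Set W) : Prop :=
  (∀ i j, i ≠ j → F i ∩ F j = ∅) ∧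
  ∀ i j k, i ≠ j → i ≠ k → j ≠ k → ¬ Between T (F i) (F j) (F k)

/-- The star `K_{1,n}`: the center `none` is adjacent to the `n` leaves `some i`. -/
def starGraph (n : ℕ) : SimpleGraph (Option (Fin n)) :=
  SimpleGraph.fromRel (fun a _ => a = none)

/-- A Ferrers digraph: the successor sets are linearly ordered by inclusion. -/
def IsFerrers {V : Type} (F : V → V → Prop) : Prop :=
  ∀ u u' : V, {v | F u v} ⊆ {v | F u' v} ∨ {v | F u' v} ⊆ {v | F u v}

/-- The Ferrers dimension `f(D)`: the minimum number of Ferrers digraphs whose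
intersection is `E`. -/
noncomputable def ferrersDim {V : Type} (E : V → V → Prop) : ℕ :=
  sInf {k | ∃ F : Fin k → V → V → Prop,
    (∀ i, IsFerrers (F i)) ∧ (∀ u v, E u v ↔ ∀ i, F i u v)}

/-- `f*(D)`: the minimum number of pairwise edge-disjoint Ferrers digraphs whose
union is the complement of `E` in `V × V`. -/
noncomputable def fstar {V : Type} (E : V → V → Prop) : ℕ :=
  sInf {k | ∃ F : Fin k → V → V → Prop,
    (∀ i, IsFerrers (F i)) ∧
    (∀ i j, i ≠ j → ∀ u v, ¬ (F i u v ∧ F j u v)) ∧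
    (∀ u v, ¬ E u v ↔ ∃ i, F i u v)}

/-- The width of the incidence poset `P(D)`: the maximum size of an antichain (under
inclusion) of predecessor sets of the digraph `E`. -/
noncomputable def incWidth {V : Type} (E : V → V → Prop) : ℕ :=
  sSup {k | ∃ A : Finset (Set V),
    (↑A : Set (Set V)) ⊆ Set.range (fun v => {u | E u v}) ∧
    IsAntichain (· ⊆ ·) (↑A : Set (Set V)) ∧ A.card = k}

/-- The digraph `D_n` with adjacency matrix `J - I`: all pairs of distinct vertices. -/
def DnRel (n : ℕ) (i j : Fin n) : Prop := i ≠ j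

/-- The digraph `E_n` with adjacency matrix `[[I, Y], [Yᵀ, 0]]` (vertex `n-1` playing
the role of the last row/column). -/
def EnRel (n : ℕ) (i j : Fin n) : Prop :=
  (i.val < n - 1 ∧ j.val < n - 1 ∧ i = j) ∨
  (i.val < n - 1 ∧ j.val = n - 1) ∨
  (i.val = n - 1 ∧ j.val < n - 1)

/-- The digraph `C_n`: a directed `n`-cycle plus a loop at each vertex. -/
def CnRel (n : ℕ) (i j : Fin n) : Prop := j = i ∨ j.val = (i.val + 1) % n

/-- The digraph `M_{k,m}` on `Fin k × Fin m`: identity diagonal blocks, all-ones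
blocks above the diagonal, all-zeros blocks below. -/
def MkmRel (k m : ℕ) (p q : Fin k × Fin m) : Prop :=
  p.1 < q.1 ∨ (p.1 = q.1 ∧ p.2 = q.2)

/-- The digraph `F_n` with adjacency matrix `[[I, Y], [Yᵀ, 1]]` (vertex `n-1` playing
the role of the last row/column). -/
def FnRel (n : ℕ) (i j : Fin n) : Prop := i = j ∨ i.val = n - 1 ∨ j.val = n - 1

/-- The digraph `P_n`: a directed path `1 → 2 → ⋯ → n` plus a loop at each vertex. -/
def PnRel (n : ℕ) (i j : Fin n) : Prop := j = i ∨ j.val = i.val + 1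

/-- `y` can be reached from `x` by a walk of `T` avoiding the set `S`. -/
def ReachableAvoiding {W : Type} (T : SimpleGraph W) (S : Set W) (x y : W) : Prop :=
  ∃ p : T.Walk x y, ∀ z ∈ p.support, z ∉ S

namespace ReachableAvoiding

variable {W : Type} {T : SimpleGraph W} {S : Set W} {x y z : W}

theorem symm (h : ReachableAvoiding T S x y) : ReachableAvoiding T S y x := by
  obtain ⟨p, hp⟩ := h
  exact ⟨p.reverse, fun z hz => hp z (by simpa using hz)⟩

theorem trans (h : ReachableAvoiding T S x y) (h' : ReachableAvoiding T S y z) :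
    ReachableAvoiding T S x z := by
  obtain ⟨p, hp⟩ := h
  obtain ⟨q, hq⟩ := h'
  refine ⟨p.append q, fun w hw => ?_⟩
  rcases (SimpleGraph.Walk.mem_support_append_iff _ _).1 hw with hw | hw
  exacts [hp w hw, hq w hw]

/-- Two vertices of a connected set `A` disjoint from `S` are joined by a walk avoiding `S`. -/
theorem of_connected {A : Set W} (hA : (T.induce A).Connected) (hAS : A ∩ S = ∅)
    (hx : x ∈ A) (hy : y ∈ A) : ReachableAvoiding T S x y := by
  obtain ⟨p⟩ := hA.preconnected ⟨x, hx⟩ ⟨y, hy⟩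
  refine ⟨p.map (SimpleGraph.Embedding.induce A).toHom, fun z hz hzS => ?_⟩
  have hmem : z ∈ p.support.map (SimpleGraph.Embedding.induce A).toHom :=
    p.support_map _ ▸ hz
  obtain ⟨w, -, rfl⟩ := List.mem_map.1 hmem
  exact (Set.eq_empty_iff_forall_notMem.1 hAS) _ ⟨w.2, hzS⟩

end ReachableAvoiding

/-- In a connected graph, two nonempty sets are joined by a path that meets each of them
only at the corresponding end. -/
theorem SimpleGraph.Connected.exists_isPath_between {W : Type} {T : SimpleGraph W}
    (hT : T.Connected) {A B : Set W} (hA : A.Nonempty) (hB : B.Nonempty) :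
    ∃ (a b : W) (p : T.Walk a b), a ∈ A ∧ b ∈ B ∧ p.IsPath ∧
      (∀ x ∈ p.support, x ∈ A → x = a) ∧ (∀ x ∈ p.support, x ∈ B → x = b) := by
  classical
  have hex : ∃ k, ∃ (a b : W) (p : T.Walk a b), a ∈ A ∧ b ∈ B ∧ p.length = k := by
    obtain ⟨a, ha⟩ := hA
    obtain ⟨b, hb⟩ := hB
    obtain ⟨p⟩ := hT.preconnected a b
    exact ⟨_, a, b, p, ha, hb, rfl⟩
  obtain ⟨a, b, p, ha, hb, hp⟩ := Nat.find_spec hex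
  have hmin : ∀ (a' b' : W) (q : T.Walk a' b'), a' ∈ A → b' ∈ B → p.length ≤ q.length :=
    fun a' b' q ha' hb' => hp ▸ Nat.find_min' hex ⟨a', b', q, ha', hb', rfl⟩
  refine ⟨a, b, p, ha, hb, p.isPath_of_length_eq_dist ?_, fun x hx hxA => ?_, fun x hx hxB => ?_⟩
  · obtain ⟨q, hq⟩ := hT.exists_walk_length_eq_dist a b
    exact le_antisymm (hq ▸ hmin a b q ha hb) (SimpleGraph.dist_le p)
  · have hlen := congrArg SimpleGraph.Walk.length (p.take_spec hx)
    rw [SimpleGraph.Walk.length_append] at hlen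
    have := hmin x b (p.dropUntil x hx) hxA hb
    exact (SimpleGraph.Walk.eq_of_length_eq_zero (p := p.takeUntil x hx) (by omega)).symm
  · have hlen := congrArg SimpleGraph.Walk.length (p.take_spec hx)
    rw [SimpleGraph.Walk.length_append] at hlen
    have := hmin a x (p.takeUntil x hx) ha hxB
    exact SimpleGraph.Walk.eq_of_length_eq_zero (p := p.dropUntil x hx) (by omega)

/-- In an acyclic graph, a path from a vertex `x` that is not a leaf to another vertex can be
extended backwards by a neighbour of `x`. -/
theorem SimpleGraph.IsAcyclic.exists_isPath_cons {W : Type} {T : SimpleGraph W}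
    (hT : T.IsAcyclic) {x r : W} (p : T.Walk x r) (hp : p.IsPath) (hxr : x ≠ r)
    (hx : x ∉ treeLeaves T) : ∃ (y : W) (h : T.Adj y x), (p.cons h).IsPath := by
  classical
  cases p with
  | nil => exact absurd rfl hxr
  | @cons _ u _ hxu q =>
    obtain ⟨y, hxy, hyu⟩ : ∃ y, T.Adj x y ∧ y ≠ u := by
      by_contra! hall
      refine hx (Set.ncard_eq_one.2 ⟨u, Set.ext fun y => ⟨fun hy => hall y hy, ?_⟩⟩)
      rintro rfl
      exact hxu
    refine ⟨y, hxy.symm, hp.cons fun hy => ?_⟩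
    rw [SimpleGraph.Walk.support_cons, List.mem_cons] at hy
    rcases hy with rfl | hy
    · exact hxy.ne rfl
    rw [SimpleGraph.Walk.cons_isPath_iff] at hp
    have hlong : ((q.takeUntil y hy).cons hxu).IsPath :=
      (hp.1.takeUntil hy).cons fun h => hp.2 (q.support_takeUntil_subset_support hy h)
    have hedge : (SimpleGraph.Walk.cons hxy SimpleGraph.Walk.nil).IsPath := by
      simp [SimpleGraph.Walk.cons_isPath_iff, hxy.ne]
    have heq := congrArg Subtype.val ((hT.subsingleton_path _ _).elim ⟨_, hlong⟩ ⟨_, hedge⟩)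
    exact hyu (SimpleGraph.Walk.cons.inj heq).1.symm

/-- Let `r` be a vertex of a finite tree. If some vertex cannot be reached from `r` avoiding `S`
and `r ∉ S`, then some leaf cannot be reached from `r` avoiding `S`. -/
theorem SimpleGraph.IsTree.exists_leaf_not_reachableAvoiding {W : Type} [Fintype W]
    {T : SimpleGraph W} (hT : T.IsTree) {S : Set W} {r x₀ : W} (hr : r ∉ S)
    (hx₀ : ¬ ReachableAvoiding T S x₀ r) :
    ∃ x ∈ treeLeaves T, ¬ ReachableAvoiding T S x r := by
  classical
  let P : ℕ → Prop := fun k => ∃ (x : W) (p : T.Walk x r),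
    ¬ ReachableAvoiding T S x r ∧ p.IsPath ∧ p.length = k
  have hbound : ∀ k, P k → k ≤ Fintype.card W := by
    rintro k ⟨x, p, -, hp, rfl⟩
    exact hp.length_lt.le
  obtain ⟨p₀⟩ := hT.connected.preconnected x₀ r
  have hP₀ : P p₀.bypass.length := ⟨x₀, p₀.bypass, hx₀, p₀.bypass_isPath, rfl⟩
  obtain ⟨x, p, hx, hp, hlen⟩ := Nat.findGreatest_spec (hbound _ hP₀) hP₀
  refine ⟨x, by_contra fun hleaf => ?_, hx⟩
  have hxr : x ≠ r := by
    rintro rfl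
    exact hx ⟨SimpleGraph.Walk.nil, by simpa using hr⟩
  obtain ⟨y, hyx, hyp⟩ := hT.isAcyclic.exists_isPath_cons p hp hxr hleaf
  have hy : ReachableAvoiding T S y r := by
    by_contra hy
    have hPy : P (p.cons hyx).length := ⟨y, p.cons hyx, hy, hyp, rfl⟩
    have := Nat.le_findGreatest (hbound _ hPy) hPy
    rw [SimpleGraph.Walk.length_cons] at this
    omega
  obtain ⟨q, hq⟩ := hy
  have heq : q.bypass = p.cons hyx :=
    congrArg Subtype.val ((hT.isAcyclic.subsingleton_path _ _).elim ⟨_, q.bypass_isPath⟩ ⟨_, hyp⟩)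
  refine hx ⟨p, fun z hz => hq z (q.support_bypass_subset_support ?_)⟩
  rw [heq, SimpleGraph.Walk.support_cons]
  exact List.mem_cons_of_mem _ hz

/-- Vertices of members of an asteroidal collection other than `F i` are joined by walks
avoiding `F i`. -/
theorem Asteroidal.reachableAvoiding {W ι : Type} {T : SimpleGraph W} {F : ι → Set W}
    (hast : Asteroidal T F) (hT : T.Connected) (hsub : ∀ i, (T.induce (F i)).Connected)
    {i j k : ι} (hij : i ≠ j) (hik : i ≠ k) {a b : W} (ha : a ∈ F j) (hb : b ∈ F k) :
    ReachableAvoiding T (F i) a b := by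
  by_cases hjk : j = k
  · subst hjk
    exact .of_connected (hsub j) (hast.1 j i hij.symm) ha hb
  obtain ⟨a', b', p, ha', hb', hp, hpa, hpb⟩ :=
    hT.exists_isPath_between (A := F j) (B := F k) ⟨a, ha⟩ ⟨b, hb⟩
  have hmid : ReachableAvoiding T (F i) a' b' := ⟨p, fun z hz hzi =>
    hast.2 j k i hjk hij.symm hik.symm
      ⟨hast.1 j k hjk, a', b', p, ha', hb', hp, hpa, hpb, z, hzi, hz⟩⟩
  exact ((ReachableAvoiding.of_connected (hsub j) (hast.1 j i hij.symm) ha ha').trans hmid).trans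
    (.of_connected (hsub k) (hast.1 k i hik.symm) hb' hb)

/-- In a connected graph, from any vertex one can reach one of two disjoint sets (the first nonempty)
while avoiding the other. -/
theorem SimpleGraph.Connected.exists_reachableAvoiding_of_disjoint {W : Type}
    {T : SimpleGraph W} (hT : T.Connected) {A B : Set W} (hA : A.Nonempty)
    (hAB : A ∩ B = ∅) (x : W) :
    (∃ a ∈ A, ReachableAvoiding T B x a) ∨ ∃ b ∈ B, ReachableAvoiding T A x b := by
  obtain ⟨_, c, p, rfl, hc, -, -, hpc⟩ := hT.exists_isPath_between (A := {x}) (B := A ∪ B)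
    (Set.singleton_nonempty x) (hA.mono Set.subset_union_left)
  have hdisj := Set.eq_empty_iff_forall_notMem.1 hAB
  rcases hc with hc | hc
  · refine .inl ⟨c, hc, p, fun z hz hzB => hdisj c ⟨hc, ?_⟩⟩
    rwa [← hpc z hz (.inr hzB)]
  · refine .inr ⟨c, hc, p, fun z hz hzA => hdisj c ⟨?_, hc⟩⟩
    rwa [← hpc z hz (.inl hzA)]

/-- If `F 1, …, F n` (with `n ≥ 2`) is an asteroidal collection of
subtrees of a finite tree `T`, then `T` has at least `n` leaves. -/
theorem stmt_1 {W : Type} [Fintype W] (T : SimpleGraph W) (hT : T.IsTree)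
    (n : ℕ) (hn : 2 ≤ n) (F : Fin n → Set W)
    (hsub : ∀ i, (T.induce (F i)).Connected)
    (hast : Asteroidal T F) :
    n ≤ (treeLeaves T).ncard := by
  have hne : ∀ i, (F i).Nonempty := fun i => Set.nonempty_coe_sort.1 (hsub i).nonempty
  have hleaf : ∀ i, ∃ x ∈ treeLeaves T, ∀ j, i ≠ j → ∀ a ∈ F j,
      ¬ ReachableAvoiding T (F i) x a := by
    intro i
    have : Nontrivial (Fin n) := Fin.nontrivial_iff_two_le.2 hn
    obtain ⟨j, hji⟩ := exists_ne i
    obtain ⟨r, hr⟩ := hne j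
    obtain ⟨x₀, hx₀⟩ := hne i
    obtain ⟨x, hx, hxr⟩ := hT.exists_leaf_not_reachableAvoiding (S := F i) (r := r) (x₀ := x₀)
      (fun hri => Set.eq_empty_iff_forall_notMem.1 (hast.1 j i hji) r ⟨hr, hri⟩)
      (fun ⟨p, hp⟩ => hp x₀ p.start_mem_support hx₀)
    exact ⟨x, hx, fun k hik a ha hxa =>
      hxr (hxa.trans (hast.reachableAvoiding hT.connected hsub hik hji.symm ha hr))⟩
  choose f hf hfar using hleaf
  have hinj : Function.Injective f := by
    intro i j hij
    by_contra hne'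
    rcases hT.connected.exists_reachableAvoiding_of_disjoint (hne i) (hast.1 i j hne') (f i) with
      ⟨a, ha, h⟩ | ⟨b, hb, h⟩
    · exact hfar j i (Ne.symm hne') a ha (hij ▸ h)
    · exact hfar i j hne' b hb h
  calc n = (Set.range f).ncard := by
        rw [← Set.image_univ, Set.ncard_image_of_injective _ hinj, Set.ncard_univ, Nat.card_fin]
    _ ≤ (treeLeaves T).ncard :=
        Set.ncard_le_ncard (Set.range_subset_iff.2 hf) (Set.toFinite _)
end

section
/- Let D be a digraph with a subtree representation in a host tree T. If vertices v and w of D have a common successor u that is not a successor of z (i.e., (v,u), (w,u) ∈ E(D) and (z,u) ∉ E(D)), then the source subtree S_z is not between S_v and S_w in T. Similarly, if v and w have a common predecessor u that is not a predecessor of z (i.e., (u,v), (u,w) ∈ E(D) and (u,z) ∉ E(D)), then the sink subtree T_z is not between T_v and T_w in T. -/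
namespace SimpleGraph

variable {V : Type*} {G : SimpleGraph V}

/-- Two vertices of a set inducing a connected subgraph are joined by a path inside that set. -/
theorem Connected.exists_isPath_support_subset {A : Set V} (hA : (G.induce A).Connected)
    {a b : V} (ha : a ∈ A) (hb : b ∈ A) :
    ∃ p : G.Walk a b, p.IsPath ∧ ∀ x ∈ p.support, x ∈ A := by
  obtain ⟨q, hq⟩ := hA.exists_isPath ⟨a, ha⟩ ⟨b, hb⟩
  refine ⟨q.map (Embedding.induce A).toHom,
    hq.map Subtype.val_injective, fun x hx => ?_⟩
  obtain ⟨y, -, rfl⟩ := List.mem_map.1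
    ((congrArg (x ∈ ·) (Walk.support_map (Embedding.induce A).toHom q)).mp hx)
  exact y.2

/-- Two paths whose only common vertex is the end of the first and the start of the second
concatenate to a path. -/
theorem Walk.IsPath.append_of_forall_eq {a b c : V} {p : G.Walk a b} {q : G.Walk b c}
    (hp : p.IsPath) (hq : q.IsPath) (h : ∀ x ∈ p.support, x ∈ q.support → x = b) :
    (p.append q).IsPath := by
  rw [Walk.isPath_def, Walk.support_append, List.nodup_append']
  refine ⟨hp.support_nodup, hq.support_nodup.tail, fun x hxp hxq => ?_⟩
  obtain rfl := h x hxp (List.mem_of_mem_tail hxq)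
  have hnodup := hq.support_nodup
  rw [← Walk.cons_tail_support] at hnodup
  exact (List.nodup_cons.1 hnodup).1 hxq

/-- In an acyclic graph, the path between two vertices of a set inducing a connected subgraph
stays inside that set. -/
theorem IsAcyclic.mem_of_mem_support (hG : G.IsAcyclic) {U : Set V}
    (hU : (G.induce U).Connected) {a b : V} (ha : a ∈ U) (hb : b ∈ U) {p : G.Walk a b}
    (hp : p.IsPath) {x : V} (hx : x ∈ p.support) : x ∈ U := by
  obtain ⟨q, hq, hqU⟩ := hU.exists_isPath_support_subset ha hb
  obtain rfl : p = q := congrArg Subtype.val ((hG.subsingleton_path a b).elim ⟨p, hp⟩ ⟨q, hq⟩)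
  exact hqU x hx

end SimpleGraph

/-- A connected set meeting both `A` and `B` meets everything between them. -/
theorem Between.inter_nonempty {W : Type} {T : SimpleGraph W} (hT : T.IsAcyclic)
    {A B C U : Set W} (hA : (T.induce A).Connected) (hB : (T.induce B).Connected)
    (hU : (T.induce U).Connected) (hAU : (A ∩ U).Nonempty) (hBU : (B ∩ U).Nonempty)
    (h : Between T A B C) : (C ∩ U).Nonempty := by
  obtain ⟨hAB, a, b, p, ha, hb, hp, hpA, hpB, x, hxC, hxp⟩ := h
  obtain ⟨a', ha', haU⟩ := hAU
  obtain ⟨b', hb', hbU⟩ := hBU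
  obtain ⟨q, hq, hqA⟩ := hA.exists_isPath_support_subset ha' ha
  obtain ⟨r, hr, hrB⟩ := hB.exists_isPath_support_subset hb hb'
  have hpr : (p.append r).IsPath :=
    hp.append_of_forall_eq hr fun y hyp hyr => hpB y hyp (hrB y hyr)
  have hqpr : (q.append (p.append r)).IsPath := by
    refine hq.append_of_forall_eq hpr fun y hyq hy => ?_
    rcases (SimpleGraph.Walk.mem_support_append_iff p r).1 hy with hyp | hyr
    · exact hpA y hyp (hqA y hyq)
    · exact (Set.eq_empty_iff_forall_notMem.1 hAB y ⟨hqA y hyq, hrB y hyr⟩).elim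
  refine ⟨x, hxC, hT.mem_of_mem_support hU haU hbU hqpr ?_⟩
  simp [SimpleGraph.Walk.mem_support_append_iff, hxp]

/-- In any subtree representation of a digraph in a host tree, if `v, w`
have a common successor `u` that is not a successor of `z`, then `S_z` is not between
`S_v` and `S_w`; similarly if `v, w` have a common predecessor `u` that is not a
predecessor of `z`, then `T_z` is not between `T_v` and `T_w`. -/
theorem stmt_2 {V W : Type} [Fintype W] (E : V → V → Prop)
    (T : SimpleGraph W) (hT : T.IsTree) (R : SubtreeRep E T) :
    (∀ u v w z : V, E v u → E w u → ¬ E z u →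
      ¬ Between T (R.src v) (R.src w) (R.src z)) ∧
    (∀ u v w z : V, E u v → E u w → ¬ E u z →
      ¬ Between T (R.snk v) (R.snk w) (R.snk z)) := by
  refine ⟨fun u v w z hv hw hz h => hz ?_, fun u v w z hv hw hz h => hz ?_⟩
  · rw [R.rep] at hv hw ⊢
    exact h.inter_nonempty hT.isAcyclic (R.src_connected v) (R.src_connected w)
      (R.snk_connected u) hv hw
  · rw [R.rep, Set.inter_comm] at hv hw ⊢
    exact h.inter_nonempty hT.isAcyclic (R.snk_connected v) (R.snk_connected w)
      (R.src_connected u) hv hw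
end

section
/- Let D be a digraph on a nonempty finite vertex set V with a subtree representation in which the source subtrees {S_v} are pairwise intersecting and the sink subtrees {T_v} are pairwise intersecting. Then either there exists u ∈ V with (u,v) ∈ E(D) for all v ∈ V (a row of 1's in the adjacency matrix) or there exists v ∈ V with (u,v) ∉ E(D) for all u ∈ V (a column of 0's); and similarly either there exists v ∈ V with (u,v) ∈ E(D) for all u ∈ V (a column of 1's) or there exists u ∈ V with (u,v) ∉ E(D) for all v ∈ V (a row of 0's). -/
/-- Two vertices of a set inducing a connected subgraph are joined by a walk inside the set. -/
theorem exists_walk_support_subset_of_induce_connected {W : Type} {T : SimpleGraph W}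
    {S : Set W} (hS : (T.induce S).Connected) {a b : W} (ha : a ∈ S) (hb : b ∈ S) :
    ∃ p : T.Walk a b, ∀ x ∈ p.support, x ∈ S := by
  obtain ⟨p⟩ := hS.preconnected ⟨a, ha⟩ ⟨b, hb⟩
  refine ⟨p.map (SimpleGraph.Embedding.induce S).toHom, fun x hx => ?_⟩
  have hx := List.mem_map.mp ((SimpleGraph.Walk.support_map _ p) ▸ hx)
  obtain ⟨y, -, rfl⟩ := hx
  exact y.2

/-- The intersection graph of subtrees of a tree has no chordless 4-cycle. -/
theorem subtrees_four_cycle_has_chord {W : Type} {T : SimpleGraph W} (hT : T.IsAcyclic)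
    {A A' B B' : Set W}
    (hA : (T.induce A).Connected) (hA' : (T.induce A').Connected)
    (hB : (T.induce B).Connected) (hB' : (T.induce B').Connected)
    (hAA : (A ∩ A').Nonempty) (hBB : (B ∩ B').Nonempty)
    (hAB : (A ∩ B).Nonempty) (hAB' : (A' ∩ B').Nonempty) :
    (A ∩ B').Nonempty ∨ (A' ∩ B).Nonempty := by
  classical
  by_contra! h
  obtain ⟨h₁, h₂⟩ := h
  have hd₁ : ∀ x, x ∈ A → x ∉ B' := fun x hx hx' => h₁.le ⟨hx, hx'⟩
  have hd₂ : ∀ x, x ∈ A' → x ∉ B := fun x hx hx' => h₂.le ⟨hx, hx'⟩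
  obtain ⟨a, ha, ha'⟩ := hAA
  obtain ⟨b, hb, hb'⟩ := hBB
  obtain ⟨c, hcA, hcB⟩ := hAB
  obtain ⟨c', hcA', hcB'⟩ := hAB'
  obtain ⟨p₁, hp₁⟩ := exists_walk_support_subset_of_induce_connected hA ha hcA
  obtain ⟨p₂, hp₂⟩ := exists_walk_support_subset_of_induce_connected hB hcB hb
  obtain ⟨q₁, hq₁⟩ := exists_walk_support_subset_of_induce_connected hA' ha' hcA'
  obtain ⟨q₂, hq₂⟩ := exists_walk_support_subset_of_induce_connected hB' hcB' hb'
  have hpq : (p₁.append p₂).toPath = (q₁.append q₂).toPath :=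
    (hT.subsingleton_path a b).elim _ _
  have hp : ∀ x ∈ ((p₁.append p₂).toPath : T.Walk a b).support, x ∈ A ∨ x ∈ B := by
    intro x hx
    have := SimpleGraph.Walk.support_toPath_subset_support _ hx
    rw [SimpleGraph.Walk.mem_support_append_iff] at this
    exact this.imp (hp₁ x) (hp₂ x)
  have hq : ∀ x ∈ ((p₁.append p₂).toPath : T.Walk a b).support, x ∈ A' ∨ x ∈ B' := by
    intro x hx
    rw [hpq] at hx
    have := SimpleGraph.Walk.support_toPath_subset_support _ hx
    rw [SimpleGraph.Walk.mem_support_append_iff] at this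
    exact this.imp (hq₁ x) (hq₂ x)
  obtain ⟨d, hd, hdA, hdA'⟩ := ((p₁.append p₂).toPath : T.Walk a b).exists_boundary_dart
    (A ∩ A') ⟨ha, ha'⟩ (fun hbA => hd₁ b hbA.1 hb')
  have hy := SimpleGraph.Walk.dart_snd_mem_support_of_mem_darts _ hd
  have hyp := hp _ hy
  have hyq := hq _ hy
  have hyB : d.snd ∈ B ∧ d.snd ∈ B' := by
    have := hd₁ d.snd
    have := hd₂ d.snd
    have : ¬ (d.snd ∈ A ∧ d.snd ∈ A') := hdA'
    tauto
  obtain ⟨r₁, hr₁⟩ := exists_walk_support_subset_of_induce_connected hA hdA.1 hcA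
  obtain ⟨r₂, hr₂⟩ := exists_walk_support_subset_of_induce_connected hB hcB hyB.1
  have hbridge := SimpleGraph.isAcyclic_iff_forall_adj_isBridge.mp hT d.adj
  have hmem := SimpleGraph.isBridge_iff_forall_walk_mem_edges.mp hbridge (r₁.append r₂)
  rw [SimpleGraph.Walk.edges_append, List.mem_append] at hmem
  rcases hmem with hmem | hmem
  · exact hd₁ _ (hr₁ _ (r₁.snd_mem_support_of_mem_edges hmem)) hyB.2
  · exact hd₂ _ hdA.2 (hr₂ _ (r₂.fst_mem_support_of_mem_edges hmem))

/-- A finite relation whose rows are linearly ordered by inclusion has a full row or an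
empty column. -/
theorem IsFerrers.exists_full_row_or_empty_column {V : Type} [Finite V] [Nonempty V]
    {F : V → V → Prop} (hF : IsFerrers F) :
    (∃ u, ∀ v, F u v) ∨ (∃ v, ∀ u, ¬ F u v) := by
  obtain ⟨u, hu⟩ : ∃ u, ∀ w, {v | F u v} ⊆ {v | F w v} → {v | F w v} ⊆ {v | F u v} := by
    obtain ⟨_, ⟨⟨u, rfl⟩, hmax⟩⟩ :=
      (Set.finite_range fun u => {v | F u v}).exists_maximal (Set.range_nonempty _)
    exact ⟨u, fun w hw => hmax ⟨w, rfl⟩ hw⟩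
  by_cases h : ∀ v, F u v
  · exact Or.inl ⟨u, h⟩
  · push Not at h
    obtain ⟨v, hv⟩ := h
    refine Or.inr ⟨v, fun w hw => hv ?_⟩
    rcases hF u w with hle | hle
    · exact hu w hle hw
    · exact hle hw

/-- The Ferrers property is preserved by reversing all edges. -/
theorem IsFerrers.flip {V : Type} {F : V → V → Prop} (hF : IsFerrers F) :
    IsFerrers (fun u v => F v u) := by
  intro u u'
  by_contra! h
  obtain ⟨⟨v, hv, hv'⟩, w, hw, hw'⟩ := h.imp Set.not_subset.mp Set.not_subset.mp
  rcases hF v w with hle | hle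
  · exact hw' (hle hv)
  · exact hv' (hle hw)

/-- If in a subtree representation of a digraph on a nonempty finite
vertex set the source subtrees are pairwise intersecting and the sink subtrees are
pairwise intersecting, then the adjacency matrix has a row of 1's or a column of 0's,
and similarly a column of 1's or a row of 0's. -/
theorem stmt_3 {V W : Type} [Fintype V] [Nonempty V] [Fintype W]
    (E : V → V → Prop) (T : SimpleGraph W) (hT : T.IsTree)
    (R : SubtreeRep E T)
    (hsrc : ∀ u v : V, (R.src u ∩ R.src v).Nonempty)
    (hsnk : ∀ u v : V, (R.snk u ∩ R.snk v).Nonempty) :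
    ((∃ u : V, ∀ v : V, E u v) ∨ (∃ v : V, ∀ u : V, ¬ E u v)) ∧
    ((∃ v : V, ∀ u : V, E u v) ∨ (∃ u : V, ∀ v : V, ¬ E u v)) := by
  have hF : IsFerrers E := by
    intro u u'
    by_contra! h
    obtain ⟨⟨v, hv, hv'⟩, w, hw, hw'⟩ := h.imp Set.not_subset.mp Set.not_subset.mp
    rcases subtrees_four_cycle_has_chord hT.isAcyclic (R.src_connected u) (R.src_connected u')
      (R.snk_connected v) (R.snk_connected w) (hsrc u u') (hsnk v w)
      ((R.rep u v).mp hv) ((R.rep u' w).mp hw) with hc | hc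
    · exact hw' ((R.rep u w).mpr hc)
    · exact hv' ((R.rep u' v).mpr hc)
  exact ⟨hF.exists_full_row_or_empty_column, hF.flip.exists_full_row_or_empty_column⟩
end

section
/- For n ≥ 3, let D_n be the digraph on vertices {1, …, n} with (i,j) ∈ E(D_n) if and only if i ≠ j (adjacency matrix J − I). In every subtree representation of D_n, either the source subtrees {S_i} have a common vertex and the sink subtrees {T_i} form an asteroidal collection, or the sink subtrees {T_i} have a common vertex and the source subtrees {S_i} form an asteroidal collection. -/
/-- A vertex set is path convex if it contains every path between two of its vertices. -/
def PathConvex {W : Type} (T : SimpleGraph W) (A : Set W) : Prop :=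
  ∀ ⦃a b : W⦄ (p : T.Walk a b), p.IsPath → a ∈ A → b ∈ A → ∀ x ∈ p.support, x ∈ A

namespace PathConvex

variable {W : Type} {T : SimpleGraph W}

theorem support_subset_of_walk (hT : T.IsTree) {a b : W} {p : T.Walk a b} (hp : p.IsPath)
    (q : T.Walk a b) {x : W} (hx : x ∈ p.support) : x ∈ q.support := by
  classical
  have h : p = q.bypass :=
    congrArg Subtype.val ((hT.isAcyclic.subsingleton_path a b).elim ⟨p, hp⟩
      ⟨q.bypass, q.bypass_isPath⟩)
  rw [h] at hx
  exact q.support_bypass_subset_support hx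

theorem of_induce_connected (hT : T.IsTree) {A : Set W} (hA : (T.induce A).Connected) :
    PathConvex T A := by
  intro a b p hp ha hb x hx
  obtain ⟨q⟩ := hA.preconnected ⟨a, ha⟩ ⟨b, hb⟩
  have h := support_subset_of_walk hT hp (q.map (SimpleGraph.Embedding.induce A).toHom) hx
  obtain ⟨y, -, rfl⟩ := List.mem_map.1 ((SimpleGraph.Walk.support_map _ q) ▸ h)
  exact y.2

theorem inter {A B : Set W} (hA : PathConvex T A) (hB : PathConvex T B) :
    PathConvex T (A ∩ B) :=
  fun _ _ p hp ha hb x hx => ⟨hA p hp ha.1 hb.1 x hx, hB p hp ha.2 hb.2 x hx⟩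

theorem support_subset_union (hT : T.IsTree) {A B : Set W} (hA : PathConvex T A)
    (hB : PathConvex T B) (h : (A ∩ B).Nonempty) {a b : W} {p : T.Walk a b}
    (hp : p.IsPath) (ha : a ∈ A) (hb : b ∈ B) {x : W} (hx : x ∈ p.support) : x ∈ A ∪ B := by
  obtain ⟨c, hcA, hcB⟩ := h
  obtain ⟨q, hq⟩ := (hT.connected a c).exists_isPath
  obtain ⟨r, hr⟩ := (hT.connected c b).exists_isPath
  have h := support_subset_of_walk hT hp (q.append r) hx
  rw [SimpleGraph.Walk.mem_support_append_iff] at h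
  exact h.imp (hA q hq ha hcA x) (hB r hr hcB hb x)

theorem union (hT : T.IsTree) {A B : Set W} (hA : PathConvex T A) (hB : PathConvex T B)
    (h : (A ∩ B).Nonempty) : PathConvex T (A ∪ B) := by
  rintro a b p hp (ha | ha) (hb | hb) x hx
  · exact Or.inl (hA p hp ha hb x hx)
  · exact support_subset_union hT hA hB h hp ha hb hx
  · exact (support_subset_union hT hB hA (Set.inter_comm A B ▸ h) hp ha hb hx).symm
  · exact Or.inr (hB p hp ha hb x hx)

/-- A walk covered by two intersecting path convex sets, starting in one and ending in the
other, meets their intersection. -/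
theorem exists_mem_support_inter (hT : T.IsTree) {A C : Set W} (hA : PathConvex T A)
    (hC : PathConvex T C) (h : (A ∩ C).Nonempty) {x y : W} (p : T.Walk x y)
    (hx : x ∈ A) (hy : y ∈ C) (hp : ∀ w ∈ p.support, w ∈ A ∪ C) :
    ∃ m ∈ p.support, m ∈ A ∩ C := by
  induction p with
  | nil => exact ⟨_, by simp, hx, hy⟩
  | @cons u v w huv p ih =>
    by_cases hv : v ∈ A
    · obtain ⟨m, hm, hm'⟩ := ih hv hy fun w hw => hp w (by simp [hw])
      exact ⟨m, by simp [hm], hm'⟩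
    · have hvC : v ∈ C := (hp v (by simp)).resolve_left hv
      obtain ⟨z, hzA, hzC⟩ := h
      obtain ⟨q, hq⟩ := (hT.connected z u).exists_isPath
      have hvq : v ∉ q.support := fun hvq => hv (hA q hq hzA hx v hvq)
      exact ⟨u, by simp, hx, hC (q.concat huv) (hq.concat hvq huv) hzC hvC u
        (by simp [SimpleGraph.Walk.support_concat])⟩

/-- Helly property for three path convex sets of a tree. -/
theorem helly_three (hT : T.IsTree) {A B C : Set W} (hA : PathConvex T A)
    (hB : PathConvex T B) (hC : PathConvex T C) (hAB : (A ∩ B).Nonempty)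
    (hBC : (B ∩ C).Nonempty) (hAC : (A ∩ C).Nonempty) : (A ∩ B ∩ C).Nonempty := by
  obtain ⟨x, hxA, hxB⟩ := hAB
  obtain ⟨y, hyB, hyC⟩ := hBC
  obtain ⟨p, hp⟩ := (hT.connected x y).exists_isPath
  obtain ⟨m, hm, hmA, hmC⟩ := exists_mem_support_inter hT hA hC hAC p hxA hyC
    fun w hw => support_subset_union hT hA hC hAC hp hxA hyC hw
  exact ⟨m, ⟨hmA, hB p hp hxB hyB m hm⟩, hmC⟩

/-- Helly property for a finite family of path convex sets of a tree, relative to a path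
convex set meeting all of them. -/
theorem helly_finset (hT : T.IsTree) {ι : Type} {F : ι → Set W}
    (hF : ∀ i, PathConvex T (F i)) (hFF : ∀ i j, (F i ∩ F j).Nonempty) (s : Finset ι)
    {A : Set W} (hA : PathConvex T A) (hne : A.Nonempty) (hAF : ∀ i, (A ∩ F i).Nonempty) :
    ∃ x ∈ A, ∀ i ∈ s, x ∈ F i := by
  classical
  induction s using Finset.induction_on generalizing A with
  | empty => exact hne.imp fun x hx => ⟨hx, by simp⟩
  | insert i s _ ih =>
    obtain ⟨x, hx, hxs⟩ := ih (hA.inter (hF i)) (hAF i) fun j =>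
      helly_three hT hA (hF i) (hF j) (hAF i) (hFF i j) (hAF j)
    exact ⟨x, hx.1, by simpa using ⟨hx.2, hxs⟩⟩

theorem exists_mem_all (hT : T.IsTree) {ι : Type} [Fintype ι] {F : ι → Set W}
    (hF : ∀ i, PathConvex T (F i)) (hFF : ∀ i j, (F i ∩ F j).Nonempty) :
    ∃ x, ∀ i, x ∈ F i := by
  have hne : Nonempty W := hT.connected.nonempty
  obtain ⟨x, -, hx⟩ := helly_finset hT hF hFF Finset.univ (A := Set.univ)
    (fun _ _ _ _ _ _ _ _ => trivial) Set.univ_nonempty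
    fun i => by simpa using hFF i i
  exact ⟨x, fun i => hx i (Finset.mem_univ i)⟩

/-- A cyclic sequence of four path convex sets, consecutive ones meeting, has a chord. -/
theorem four_cycle_chord (hT : T.IsTree) {A B C D : Set W} (hA : PathConvex T A)
    (hB : PathConvex T B) (hC : PathConvex T C) (hD : PathConvex T D)
    (hAB : (A ∩ B).Nonempty) (hBC : (B ∩ C).Nonempty) (hCD : (C ∩ D).Nonempty)
    (hDA : (D ∩ A).Nonempty) : (A ∩ C).Nonempty ∨ (B ∩ D).Nonempty := by
  obtain ⟨x, ⟨hxA, hxB⟩, hx⟩ := helly_three hT hA hB (hC.union hT hD hCD) hAB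
    (hBC.mono fun _ h => ⟨h.1, Or.inl h.2⟩) (hDA.mono fun _ h => ⟨h.2, Or.inr h.1⟩)
  exact hx.imp (fun h => ⟨x, hxA, h⟩) fun h => ⟨x, hxB, h⟩

section CrossIntersecting

variable {ι : Type} {F G : ι → Set W}

theorem not_inter_and_inter (hT : T.IsTree) (hF : ∀ i, PathConvex T (F i))
    (hG : ∀ i, PathConvex T (G i)) (hFG : ∀ i j, i ≠ j ↔ (F i ∩ G j).Nonempty)
    {i j : ι} (hij : i ≠ j) (hs : (F i ∩ F j).Nonempty) : ¬ (G i ∩ G j).Nonempty := by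
  intro ht
  rcases four_cycle_chord hT (hF i) (hF j) (hG i) (hG j) hs ((hFG j i).1 hij.symm) ht
    (Set.inter_comm (F i) (G j) ▸ (hFG i j).1 hij) with h | h
  · exact (hFG i i).2 h rfl
  · exact (hFG j j).2 h rfl

theorem inter_or_inter (hT : T.IsTree) (hF : ∀ i, PathConvex T (F i))
    (hG : ∀ i, PathConvex T (G i)) (hFG : ∀ i j, i ≠ j ↔ (F i ∩ G j).Nonempty)
    {i j k : ι} (hij : i ≠ j) (hik : i ≠ k) (hjk : j ≠ k) :
    (F i ∩ F k).Nonempty ∨ (G j ∩ G k).Nonempty := by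
  have hki := (hFG k i).1 hik.symm
  have hji := (hFG j i).1 hij.symm
  have hjk' := (hFG j k).1 hjk
  have h₁ : PathConvex T (F k ∪ G i) := (hF k).union hT (hG i) hki
  have h₂ : PathConvex T (F j ∪ G k) := (hF j).union hT (hG k) hjk'
  have h₃ : PathConvex T ((F k ∪ G i) ∪ (F j ∪ G k)) :=
    h₁.union hT h₂ (hji.mono fun _ h => ⟨Or.inr h.2, Or.inl h.1⟩)
  obtain ⟨x, ⟨hxi, hxj⟩, hx⟩ := helly_three hT (hF i) (hG j) h₃ ((hFG i j).1 hij)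
    (((hFG k j).1 hjk.symm).mono fun _ h => ⟨h.2, Or.inl (Or.inl h.1)⟩)
    (((hFG i k).1 hik).mono fun _ h => ⟨h.1, Or.inr (Or.inr h.2)⟩)
  rcases hx with (hx | hx) | (hx | hx)
  · exact Or.inl ⟨x, hxi, hx⟩
  · exact absurd rfl ((hFG i i).2 ⟨x, hxi, hx⟩)
  · exact absurd rfl ((hFG j j).2 ⟨x, hx, hxj⟩)
  · exact Or.inr ⟨x, hxj, hx⟩

theorem inter_of_inter (hT : T.IsTree) (hF : ∀ i, PathConvex T (F i))
    (hG : ∀ i, PathConvex T (G i)) (hFG : ∀ i j, i ≠ j ↔ (F i ∩ G j).Nonempty)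
    {i j k : ι} (hij : i ≠ j) (hik : i ≠ k) (hs : (F i ∩ F j).Nonempty) :
    (F i ∩ F k).Nonempty := by
  by_cases hjk : j = k
  · exact hjk ▸ hs
  · rw [Set.inter_comm]
    refine (inter_or_inter hT hF hG hFG (Ne.symm hjk) hik.symm hij.symm).resolve_right ?_
    rw [Set.inter_comm]
    exact not_inter_and_inter hT hF hG hFG hij hs

/-- If two members of `F` meet, all do, while the members of `G` are asteroidal. -/
theorem common_and_asteroidal_of_inter [Fintype ι] (hT : T.IsTree)
    (hF : ∀ i, PathConvex T (F i)) (hG : ∀ i, PathConvex T (G i))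
    (hne : ∀ i, (F i).Nonempty) (hFG : ∀ i j, i ≠ j ↔ (F i ∩ G j).Nonempty)
    {i₀ j₀ : ι} (h₀ : i₀ ≠ j₀) (hs : (F i₀ ∩ F j₀).Nonempty) :
    (∃ x, ∀ i, x ∈ F i) ∧ Asteroidal T G := by
  have hall : ∀ i j, (F i ∩ F j).Nonempty := by
    intro i j
    by_cases hij : i = j
    · subst hij
      simpa using hne i
    · by_cases hi : i = i₀
      · subst hi
        exact inter_of_inter hT hF hG hFG h₀ hij hs
      · have h := inter_of_inter hT hF hG hFG h₀ (Ne.symm hi) hs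
        rw [Set.inter_comm] at h
        exact inter_of_inter hT hF hG hFG hi hij h
  have hdisj : ∀ i j, i ≠ j → G i ∩ G j = ∅ := fun i j hij =>
    Set.not_nonempty_iff_eq_empty.1 (not_inter_and_inter hT hF hG hFG hij (hall i j))
  refine ⟨exists_mem_all hT hF hall, hdisj, ?_⟩
  rintro i j k - hik hjk ⟨-, a, b, p, ha, hb, hp, -, -, x, hxk, hxp⟩
  have hki := (hFG k i).1 hik.symm
  have hkj := (hFG k j).1 hjk.symm
  have hc := (hF k).union hT (hG i) hki
  rcases support_subset_union hT hc (hG j)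
    (hkj.mono fun _ h => ⟨Or.inl h.1, h.2⟩) hp (Or.inr ha) hb hxp with (hx | hx) | hx
  · exact (hFG k k).2 ⟨x, hx, hxk⟩ rfl
  · exact (hdisj i k hik).subset ⟨hx, hxk⟩
  · exact (hdisj j k hjk).subset ⟨hx, hxk⟩

end CrossIntersecting

end PathConvex

/-- For `n ≥ 3`, in every subtree representation of `D_n` (adjacency
matrix `J - I`) in a host tree, either the source subtrees have a common vertex and
the sink subtrees form an asteroidal collection, or vice versa. -/
theorem stmt_4 {W : Type} [Fintype W] (n : ℕ) (hn : 3 ≤ n)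
    (T : SimpleGraph W) (hT : T.IsTree)
    (R : SubtreeRep (DnRel n) T) :
    ((∃ x : W, ∀ i : Fin n, x ∈ R.src i) ∧ Asteroidal T R.snk) ∨
    ((∃ x : W, ∀ i : Fin n, x ∈ R.snk i) ∧ Asteroidal T R.src) := by
  have hS := fun i => PathConvex.of_induce_connected hT (R.src_connected i)
  have hK := fun i => PathConvex.of_induce_connected hT (R.snk_connected i)
  have hSne : ∀ i, (R.src i).Nonempty := fun i =>
    Set.nonempty_coe_sort.1 (R.src_connected i).nonempty
  have hKne : ∀ i, (R.snk i).Nonempty := fun i =>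
    Set.nonempty_coe_sort.1 (R.snk_connected i).nonempty
  have hSK : ∀ i j, i ≠ j ↔ (R.src i ∩ R.snk j).Nonempty := R.rep
  have hKS : ∀ i j, i ≠ j ↔ (R.snk i ∩ R.src j).Nonempty := fun i j => by
    rw [Set.inter_comm, ← hSK, ne_comm]
  have hac : (⟨0, by omega⟩ : Fin n) ≠ ⟨2, by omega⟩ := by simp
  have hbc : (⟨1, by omega⟩ : Fin n) ≠ ⟨2, by omega⟩ := by simp
  rcases PathConvex.inter_or_inter hT hS hK hSK
    (show (⟨0, by omega⟩ : Fin n) ≠ ⟨1, by omega⟩ by simp) hac hbc with h | h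
  · exact Or.inl (PathConvex.common_and_asteroidal_of_inter hT hS hK hSne hSK hac h)
  · exact Or.inr (PathConvex.common_and_asteroidal_of_inter hT hK hS hKne hKS hbc h)
end

section
/- For n ≥ 3, the digraph D_n on vertices {1, …, n} with (i,j) ∈ E(D_n) if and only if i ≠ j (adjacency matrix J − I) has leafage l(D_n) = n. -/
namespace SimpleGraph

variable {W : Type} {G : SimpleGraph W}

lemma Connected.induce_insert_of_adj {s : Set W} (hs : (G.induce s).Connected) {u v : W}
    (hu : u ∈ s) (huv : G.Adj u v) : (G.induce (insert v s)).Connected := by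
  have h := induce_union_connected hs.preconnected
    (induce_pair_connected_of_adj huv).preconnected ⟨u, hu, by simp⟩
  have he : s ∪ {u, v} = insert v s := by
    ext x
    simp only [Set.mem_union, Set.mem_insert_iff, Set.mem_singleton_iff]
    grind
  rwa [he] at h

lemma Connected.exists_adj_mem_notMem {C A : Set W} (hC : (G.induce C).Connected)
    (h₁ : (C ∩ A).Nonempty) (h₂ : (C ∩ Aᶜ).Nonempty) :
    ∃ x ∈ C ∩ A, ∃ y ∈ C ∩ Aᶜ, G.Adj x y := by
  obtain ⟨x, hxC, hxA⟩ := h₁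
  obtain ⟨y, hyC, hyA⟩ := h₂
  obtain ⟨p⟩ := hC.preconnected ⟨x, hxC⟩ ⟨y, hyC⟩
  obtain ⟨d, -, hd₁, hd₂⟩ := p.exists_boundary_dart (Subtype.val ⁻¹' A) hxA hyA
  exact ⟨d.fst, ⟨d.fst.2, hd₁⟩, d.snd, ⟨d.snd.2, hd₂⟩, d.adj⟩

/-- In a connected finite graph, disjoint connected sets can be enlarged to a partition of the
vertices into two connected sets. -/
lemma Connected.exists_connected_compl [Finite W] (hG : G.Connected) {S T : Set W}
    (hS : (G.induce S).Connected) (hT : (G.induce T).Connected) (hST : Disjoint S T) :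
    ∃ A : Set W, S ⊆ A ∧ T ⊆ Aᶜ ∧ (G.induce A).Connected ∧ (G.induce Aᶜ).Connected := by
  induction h : (S ∪ T)ᶜ.ncard using Nat.strong_induction_on generalizing S T with
  | _ m ih =>
  by_cases hU : S ∪ T = Set.univ
  · have hc : Sᶜ = T := (IsCompl.of_eq hST.eq_bot hU).compl_eq
    exact ⟨S, subset_rfl, hc.ge, hS, hc ▸ hT⟩
  obtain ⟨s⟩ := hS.nonempty
  obtain ⟨z, hz⟩ := (Set.ne_univ_iff_exists_notMem _).1 hU
  obtain ⟨p⟩ := hG.preconnected s.1 z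
  obtain ⟨⟨⟨x, y⟩, hxy⟩, -, hx, hy⟩ := p.exists_boundary_dart (S ∪ T) (Or.inl s.2) hz
  simp only at hx hy hxy
  have hlt : (insert y (S ∪ T))ᶜ.ncard < m := by
    rw [← h]
    refine Set.ncard_lt_ncard ?_ (Set.toFinite _)
    exact compl_lt_compl_iff_lt.2 (Set.ssubset_insert hy)
  rw [Set.mem_union, not_or] at hy
  rcases hx with hx | hx
  · obtain ⟨A, hA, h⟩ := ih _ hlt (hS.induce_insert_of_adj hx hxy) hT
      (Set.disjoint_insert_left.2 ⟨hy.2, hST⟩) (by rw [Set.insert_union])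
    exact ⟨A, (Set.subset_insert _ _).trans hA, h⟩
  · obtain ⟨A, hA, hB, h⟩ := ih _ hlt hS (hT.induce_insert_of_adj hx hxy)
      (Set.disjoint_insert_right.2 ⟨hy.1, hST⟩) (by rw [Set.union_insert])
    exact ⟨A, hA, (Set.subset_insert _ _).trans hB, h⟩

lemma Connected.reachable_deleteEdges_of_notMem {A : Set W} (hA : (G.induce A).Connected)
    {x y u v : W} (hx : x ∈ A) (hy : y ∈ A) (hv : v ∉ A) :
    (G.deleteEdges {s(u, v)}).Reachable x y := by
  let f : G.induce A →g G.deleteEdges {s(u, v)} :=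
    { toFun := Subtype.val
      map_rel' := by
        rintro ⟨a, ha⟩ ⟨b, hb⟩ hab
        simp only [deleteEdges_adj, Set.mem_singleton_iff, Sym2.eq_iff]
        refine ⟨hab, ?_⟩
        rintro (⟨-, rfl⟩ | ⟨rfl, -⟩)
        · exact hv hb
        · exact hv ha }
  exact (hA.preconnected ⟨x, hx⟩ ⟨y, hy⟩).map f

/-- In an acyclic graph, at most one edge joins two complementary connected sets. -/
lemma IsAcyclic.eq_and_eq_of_adj_of_connected_compl (hG : G.IsAcyclic) {A : Set W}
    (hA : (G.induce A).Connected) (hB : (G.induce Aᶜ).Connected) {a b a' b' : W}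
    (ha : a ∈ A) (hb : b ∉ A) (hab : G.Adj a b) (ha' : a' ∈ A) (hb' : b' ∉ A)
    (hab' : G.Adj a' b') : a = a' ∧ b = b' := by
  by_contra hne
  have hbr := isAcyclic_iff_forall_adj_isBridge.1 hG hab
  rw [isBridge_iff] at hbr
  refine hbr (((hA.reachable_deleteEdges_of_notMem ha ha' hb).trans (w := b') ?_).trans ?_)
  · refine Adj.reachable ?_
    rw [deleteEdges_adj]
    refine ⟨hab', ?_⟩
    rw [Set.mem_singleton_iff, Sym2.eq_iff]
    rintro (⟨rfl, rfl⟩ | ⟨rfl, rfl⟩)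
    · exact hne ⟨rfl, rfl⟩
    · exact hb ha'
  · rw [Sym2.eq_swap]
    exact hB.reachable_deleteEdges_of_notMem hb' hb (not_not.2 ha)

/-- Two partitions of a tree into two connected sets never cross. -/
lemma IsAcyclic.disjoint_or_disjoint_compl (hG : G.IsAcyclic) {A B : Set W}
    (hA : (G.induce A).Connected) (hA' : (G.induce Aᶜ).Connected)
    (hB : (G.induce B).Connected) (hB' : (G.induce Bᶜ).Connected)
    (h₁ : (A ∩ Bᶜ).Nonempty) (h₂ : (B ∩ Aᶜ).Nonempty) : Disjoint A B ∨ Disjoint Aᶜ Bᶜ := by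
  by_contra! h
  rw [Set.not_disjoint_iff_nonempty_inter, Set.not_disjoint_iff_nonempty_inter] at h
  obtain ⟨x, hx, y, hy, hxy⟩ := hA.exists_adj_mem_notMem h.1 h₁
  obtain ⟨x', hx', y', hy', hxy'⟩ := hA'.exists_adj_mem_notMem (Set.inter_comm _ _ ▸ h₂) h.2
  obtain ⟨rfl, -⟩ := hG.eq_and_eq_of_adj_of_connected_compl hB hB' hx.2 hy.2 hxy hx'.2 hy'.2 hxy'
  exact hx'.1 hx.1

lemma IsTree.exists_mem_treeLeaves [Finite W] (hG : G.IsTree) {A : Set W}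
    (hA : (G.induce A).Connected) (hB : (G.induce Aᶜ).Connected) :
    ∃ x ∈ A, x ∈ treeLeaves G := by
  induction h : A.ncard using Nat.strong_induction_on generalizing A with
  | _ m ih =>
  obtain ⟨⟨z, hz⟩⟩ := hA.nonempty
  obtain ⟨⟨w, hw⟩⟩ := hB.nonempty
  obtain ⟨p⟩ := hG.connected.preconnected z w
  obtain ⟨⟨⟨a, b⟩, hab⟩, -, ha, hb⟩ := p.exists_boundary_dart A hz hw
  simp only at ha hb hab
  by_cases hc : ∃ c ∈ A, G.Adj a c
  · obtain ⟨c, hcA, hac⟩ := hc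
    have hc₁ : (G.induce {c}).Connected := by
      have := (Set.subsingleton_singleton (a := c)).coe_sort
      exact Connected.of_subsingleton
    obtain ⟨A', hcA', hA'B, hA'₁, hA'₂⟩ := hG.connected.exists_connected_compl hc₁
      (hB.induce_insert_of_adj hb hab.symm) (by
        rw [Set.disjoint_singleton_left]
        rintro (rfl | h)
        · exact hac.ne rfl
        · exact h hcA)
    have hsub : A' ⊆ A := fun x hx => by
      by_contra hxA
      exact hA'B (Or.inr hxA) hx
    have hlt : A'.ncard < m := h ▸ Set.ncard_lt_ncard
      ((Set.ssubset_iff_of_subset hsub).2 ⟨a, ha, hA'B (Or.inl rfl)⟩) (Set.toFinite _)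
    obtain ⟨x, hx, hxl⟩ := ih _ hlt hA'₁ hA'₂ rfl
    exact ⟨x, hsub hx, hxl⟩
  · refine ⟨a, ha, ?_⟩
    have he : G.neighborSet a = {b} := by
      ext y
      rw [mem_neighborSet, Set.mem_singleton_iff]
      refine ⟨fun hy => ?_, fun hy => hy ▸ hab⟩
      have hyA : y ∉ A := fun hyA => hc ⟨y, hyA, hy⟩
      exact (hG.isAcyclic.eq_and_eq_of_adj_of_connected_compl hA hB ha hyA hy ha hb hab).2
    simp [treeLeaves, he]

end SimpleGraph

lemma pairwise_disjoint_or_pairwise_disjoint_compl {ι W : Type} {A : ι → Set W}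
    (hcross : ∀ i j, i ≠ j → (A i ∩ (A j)ᶜ).Nonempty)
    (hA : ∀ i j, i ≠ j → Disjoint (A i) (A j) ∨ Disjoint (A i)ᶜ (A j)ᶜ) :
    Pairwise (fun i j => Disjoint (A i) (A j)) ∨
      Pairwise (fun i j => Disjoint (A i)ᶜ (A j)ᶜ) := by
  have hmix : ∀ i j k, i ≠ k → Disjoint (A i) (A j) → ¬ Disjoint (A j)ᶜ (A k)ᶜ := by
    intro i j k hik h₁ h₂
    obtain ⟨x, hx, hx'⟩ := hcross i k hik
    exact Set.disjoint_left.1 h₂ (Set.disjoint_left.1 h₁ hx) hx'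
  by_contra! h
  simp only [Pairwise, not_forall] at h
  obtain ⟨⟨i, j, hij, h₁⟩, k, l, hkl, h₂⟩ := h
  have h₁' := (hA i j hij).resolve_left h₁
  have h₂' := (hA k l hkl).resolve_right h₂
  by_cases hik : i = k
  · subst hik
    by_cases hjl : l = j
    · exact h₂ (hjl ▸ h₁')
    · exact hmix l i j hjl h₂'.symm h₁'
  by_cases hjk : j = k
  · subst hjk
    by_cases hil : l = i
    · exact h₂ (hil ▸ h₁'.symm)
    · exact hmix l j i hil h₂'.symm h₁'.symm
  rcases hA j k hjk with h | h
  · exact hmix k j i (Ne.symm hik) h.symm h₁'.symm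
  · by_cases hjl : l = j
    · subst hjl
      exact hmix k l i (Ne.symm hik) h₂' h₁'.symm
    · exact hmix l k j hjl h₂'.symm h.symm

lemma SubtreeRep.le_ncard_treeLeaves {n : ℕ} {W : Type} [Finite W] {G : SimpleGraph W}
    (hG : G.IsTree) (R : SubtreeRep (DnRel n) G) : n ≤ (treeLeaves G).ncard := by
  have hd : ∀ i, Disjoint (R.src i) (R.snk i) := fun i => by
    rw [Set.disjoint_iff_inter_eq_empty, ← Set.not_nonempty_iff_eq_empty, ← R.rep]
    exact fun h => h rfl
  choose A hS hT hA hA' using fun i =>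
    hG.connected.exists_connected_compl (R.src_connected i) (R.snk_connected i) (hd i)
  have hcross : ∀ i j, i ≠ j → (A i ∩ (A j)ᶜ).Nonempty := fun i j hij =>
    ((R.rep i j).1 hij).mono (Set.inter_subset_inter (hS i) (hT j))
  have key : ∀ B : Fin n → Set W, (∀ i, ∃ x ∈ B i, x ∈ treeLeaves G) →
      Pairwise (fun i j => Disjoint (B i) (B j)) → n ≤ (treeLeaves G).ncard := by
    intro B hB hdis
    choose f hf hfl using hB
    have hinj : Function.Injective f := fun i j hij => by
      by_contra hne
      exact Set.disjoint_left.1 (hdis hne) (hf i) (hij ▸ hf j)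
    have hle := Set.ncard_le_ncard (Set.range_subset_iff.2 hfl) (Set.toFinite _)
    rwa [← Set.image_univ, Set.ncard_image_of_injective _ hinj, Set.ncard_univ,
      Nat.card_fin] at hle
  rcases pairwise_disjoint_or_pairwise_disjoint_compl hcross fun i j hij =>
    hG.isAcyclic.disjoint_or_disjoint_compl (hA i) (hA' i) (hA j) (hA' j) (hcross i j hij)
      (hcross j i hij.symm) with h | h
  · exact key A (fun i => hG.exists_mem_treeLeaves (hA i) (hA' i)) h
  · exact key _ (fun i => hG.exists_mem_treeLeaves (hA' i) (by rw [compl_compl]; exact hA i)) h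

lemma connected_induce_starGraph_of_mem {W : Type} {r : W} {s : Set W} (hr : r ∈ s) :
    ((SimpleGraph.starGraph r).induce s).Connected := by
  rw [SimpleGraph.connected_iff_exists_forall_reachable]
  refine ⟨⟨r, hr⟩, fun ⟨x, hx⟩ => ?_⟩
  by_cases hrx : r = x
  · subst hrx
    exact SimpleGraph.Reachable.refl _
  · refine SimpleGraph.Adj.reachable ?_
    simp [hrx]

/-- The representation of `D_n` in a star: the sink sets are the `n` leaves and each source set
omits exactly one leaf. -/
def DnRel.starRep (n : ℕ) :
    SubtreeRep (DnRel n) (SimpleGraph.starGraph (none : Option (Fin n))) where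
  src i := {some i}ᶜ
  snk i := {some i}
  src_connected i := connected_induce_starGraph_of_mem (by simp)
  snk_connected i := by
    have := (Set.subsingleton_singleton (a := some i)).coe_sort
    exact SimpleGraph.Connected.of_subsingleton
  rep i j := by
    rw [Set.inter_singleton_nonempty, Set.mem_compl_singleton_iff, DnRel, ne_comm]
    simp

lemma ncard_treeLeaves_starGraph {n : ℕ} (hn : 3 ≤ n) :
    (treeLeaves (SimpleGraph.starGraph (none : Option (Fin n)))).ncard = n := by
  have h : treeLeaves (SimpleGraph.starGraph (none : Option (Fin n))) = Set.range some := by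
    ext x
    cases x with
    | none =>
      have he : (SimpleGraph.starGraph (none : Option (Fin n))).neighborSet none =
          Set.range some := by
        ext y
        cases y <;> simp
      rw [treeLeaves, Set.mem_ofPred_eq, he, ← Set.image_univ,
        Set.ncard_image_of_injective _ (Option.some_injective _), Set.ncard_univ, Nat.card_fin]
      simpa using by omega
    | some i =>
      have he : (SimpleGraph.starGraph (none : Option (Fin n))).neighborSet (some i) =
          {none} := by
        ext y
        cases y <;> simp
      simp [treeLeaves, he]
  rw [h, ← Set.image_univ, Set.ncard_image_of_injective _ (Option.some_injective _),
    Set.ncard_univ, Nat.card_fin]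

/-- For `n ≥ 3`, the digraph `D_n` with adjacency matrix `J - I`
has leafage exactly `n`. -/
theorem stmt_5 (n : ℕ) (hn : 3 ≤ n) : digLeafage (DnRel n) = n := by
  refine le_antisymm (Nat.sInf_le ?_) (le_csInf ?_ ?_)
  · exact ⟨_, inferInstance, _, SimpleGraph.isTree_starGraph _, ⟨DnRel.starRep n⟩,
      ncard_treeLeaves_starGraph hn⟩
  · exact ⟨_, _, inferInstance, _, SimpleGraph.isTree_starGraph _, ⟨DnRel.starRep n⟩, rfl⟩
  · rintro k ⟨W, _, G, hG, ⟨R⟩, rfl⟩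
    exact R.le_ncard_treeLeaves hG
end

section
/- For every digraph D, the leafage is at least the disjoint Ferrers dimension: l(D) ≥ f*(D). In particular, if D has a subtree representation in a host tree with k ≥ 3 leaves, then the complement of D in V × V is the union of k pairwise edge-disjoint Ferrers digraphs. -/
/-- Dilworth's theorem for a finite subset `P` of a partial order: if every antichain in `P` has
at most `k` elements, then `P` can be coloured with `k` colours so that every colour class is a
chain. -/
theorem exists_chain_coloring {α : Type*} [PartialOrder α] (P : Finset α) (k : ℕ)
    (hP : ∀ A ⊆ P, IsAntichain (· ≤ ·) (A : Set α) → A.card ≤ k) :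
    ∃ c : α → ℕ, (∀ x ∈ P, c x < k) ∧
      ∀ x ∈ P, ∀ y ∈ P, c x = c y → x ≤ y ∨ y ≤ x := by
  classical
  induction P using Finset.strongInduction generalizing k with
  | H P ih =>
  obtain rfl | hne := P.eq_empty_or_nonempty
  · exact ⟨fun _ => 0, by simp, by simp⟩
  obtain ⟨a, ha⟩ := P.exists_maximal hne
  have hk : 1 ≤ k := by
    simpa using hP {a} (by simpa using ha.1) (by simp)
  -- a chain whose removal leaves no antichain of size `k` can be given a colour of its own
  have extend : ∀ K ⊆ P, a ∈ K → (∀ x ∈ K, ∀ y ∈ K, x ≤ y ∨ y ≤ x) →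
      (∀ A ⊆ P \ K, IsAntichain (· ≤ ·) (A : Set α) → A.card ≠ k) →
      ∃ c : α → ℕ, (∀ x ∈ P, c x < k) ∧ ∀ x ∈ P, ∀ y ∈ P, c x = c y → x ≤ y ∨ y ≤ x := by
    intro K hKP haK hK hA
    obtain ⟨c, hc, hcc⟩ := ih (P \ K)
      (Finset.ssubset_iff_of_subset Finset.sdiff_subset |>.2 ⟨a, ha.1, by simp [haK]⟩) (k - 1)
      (fun A hAP hAa => by
        have := hA A hAP hAa
        have := hP A (hAP.trans Finset.sdiff_subset) hAa
        omega)
    refine ⟨fun x => if x ∈ K then k - 1 else c x, fun x hx => ?_, fun x hx y hy hxy => ?_⟩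
    · by_cases hxK : x ∈ K
      · simp only [hxK, if_true]; omega
      · have := hc x (by simp [hx, hxK])
        simp only [hxK, if_false]; omega
    · have hx' := fun h : x ∉ K => hc x (by simp [hx, h])
      have hy' := fun h : y ∉ K => hc y (by simp [hy, h])
      by_cases hxK : x ∈ K <;> by_cases hyK : y ∈ K <;>
        simp only [hxK, hyK, if_true, if_false] at hxy
      · exact hK x hxK y hyK
      · have := hy' hyK; omega
      · have := hx' hxK; omega
      · exact hcc x (by simp [hx, hxK]) y (by simp [hy, hyK]) hxy
  by_cases hcase : ∀ A ⊆ P \ {a}, IsAntichain (· ≤ ·) (A : Set α) → A.card ≠ k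
  · exact extend {a} (by simpa using ha.1) (by simp) (by simp) hcase
  push Not at hcase
  obtain ⟨A₀, hA₀, hA₀a, hA₀k⟩ := hcase
  obtain ⟨c, hc, hcc⟩ := ih (P \ {a})
    (Finset.ssubset_iff_of_subset Finset.sdiff_subset |>.2 ⟨a, ha.1, by simp⟩) k
    (fun A hA => hP A (hA.trans Finset.sdiff_subset))
  -- an antichain of size `k` meets every colour class
  have meets : ∀ A ⊆ P \ {a}, IsAntichain (· ≤ ·) (A : Set α) → A.card = k →
      ∀ i < k, ∃ x ∈ A, c x = i := by
    intro A hA hAa hAk i hi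
    have hinj : Set.InjOn c A := fun x hx y hy hxy => by
      by_contra hne
      rcases hcc x (hA hx) y (hA hy) hxy with h | h
      · exact hAa hx hy hne h
      · exact hAa hy hx (Ne.symm hne) h
    have himg : A.image c = Finset.range k := Finset.eq_of_subset_of_card_le
      (fun j hj => by
        obtain ⟨x, hx, rfl⟩ := Finset.mem_image.1 hj
        exact Finset.mem_range.2 (hc x (hA hx)))
      (by rw [Finset.card_image_of_injOn hinj, hAk, Finset.card_range])
    exact Finset.mem_image.1 (himg ▸ Finset.mem_range.2 hi)
  let Q : ℕ → Finset α := fun i => (P \ {a}).filter fun x => c x = i ∧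
    ∃ A ⊆ P \ {a}, IsAntichain (· ≤ ·) (A : Set α) ∧ A.card = k ∧ x ∈ A
  have hQ : ∀ i : Fin k, ∃ x, Maximal (· ∈ Q i) x := fun i => by
    obtain ⟨x, hx, hxi⟩ := meets A₀ hA₀ hA₀a hA₀k i i.2
    exact (Q i).exists_maximal
      ⟨x, Finset.mem_filter.2 ⟨hA₀ hx, hxi, A₀, hA₀, hA₀a, hA₀k, hx⟩⟩
  choose x hx using hQ
  have hxQ := fun i => Finset.mem_filter.1 (hx i).1
  have top : ∀ A ⊆ P \ {a}, IsAntichain (· ≤ ·) (A : Set α) → A.card = k →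
      ∀ i : Fin k, ∀ y ∈ A, c y = i → y ≤ x i := by
    intro A hA hAa hAk i y hy hyi
    rcases hcc y (hA hy) (x i) (hxQ i).1 (hyi.trans (hxQ i).2.1.symm) with h | h
    · exact h
    · exact (hx i).2 (Finset.mem_filter.2 ⟨hA hy, hyi, A, hA, hAa, hAk, hy⟩) h
  have hle : ∀ i j, x i ≤ x j → i = j := by
    intro i j hij
    obtain ⟨-, hj, A, hA, hAa, hAk, hjA⟩ := hxQ j
    obtain ⟨y, hy, hyi⟩ := meets A hA hAa hAk i i.2
    have h : y = x j := hAa.eq hy hjA ((top A hA hAa hAk i y hy hyi).trans hij)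
    exact Fin.ext (by rw [← hyi, h, hj])
  obtain ⟨i, hi⟩ : ∃ i, x i ≤ a := by
    by_contra! hno
    have hxa : ∀ i, x i ≠ a := fun i h => hno i h.le
    have hcard := hP (insert a (Finset.univ.image x))
      (Finset.insert_subset ha.1 (Finset.image_subset_iff.2 fun i _ =>
        (Finset.mem_sdiff.1 (hxQ i).1).1)) (by
          intro y hy z hz hyz hle'
          simp only [Finset.coe_insert, Finset.coe_image, Finset.coe_univ, Set.image_univ,
            Set.mem_insert_iff, Set.mem_range] at hy hz
          rcases hy with rfl | ⟨i, rfl⟩ <;> rcases hz with rfl | ⟨j, rfl⟩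
          · exact hyz rfl
          · exact hno j (ha.2 (Finset.mem_sdiff.1 (hxQ j).1).1 hle')
          · exact hno i hle'
          · exact hyz (congrArg x (hle i j hle')))
    rw [Finset.card_insert_of_notMem (by simpa using hxa),
      Finset.card_image_of_injective _ (fun i j h => hle i j h.le)] at hcard
    simp at hcard
  refine extend (insert a ((P \ {a}).filter fun z => c z = i ∧ z ≤ x i)) ?_ (by simp) ?_ ?_
  · exact Finset.insert_subset ha.1 ((Finset.filter_subset _ _).trans Finset.sdiff_subset)
  · intro y hy z hz
    rw [Finset.mem_insert, Finset.mem_filter] at hy hz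
    rcases hy with rfl | ⟨hy, hyi, hyx⟩ <;> rcases hz with rfl | ⟨hz, hzi, hzx⟩
    · exact Or.inl le_rfl
    · exact Or.inr (hzx.trans hi)
    · exact Or.inl (hyx.trans hi)
    · exact hcc y hy z hz (hyi.trans hzi.symm)
  · intro A hA hAa hAk
    have hA' : A ⊆ P \ {a} := hA.trans
      (Finset.sdiff_subset_sdiff le_rfl (by simp))
    obtain ⟨y, hy, hyi⟩ := meets A hA' hAa hAk i i.2
    exact (Finset.mem_sdiff.1 (hA hy)).2 (Finset.mem_insert_of_mem (Finset.mem_filter.2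
      ⟨hA' hy, hyi, top A hA' hAa hAk i y hy hyi⟩))

namespace SimpleGraph

variable {W : Type*} {G : SimpleGraph W}

/-- A half of a graph is a vertex set inducing a connected subgraph, whose complement also induces
a connected subgraph. -/
def IsHalf (G : SimpleGraph W) (B : Set W) : Prop :=
  (G.induce B).Connected ∧ (G.induce Bᶜ).Connected

theorem IsHalf.compl {B : Set W} (h : G.IsHalf B) : G.IsHalf Bᶜ :=
  ⟨h.2, by rw [compl_compl]; exact h.1⟩

theorem IsHalf.nonempty {B : Set W} (h : G.IsHalf B) : B.Nonempty :=
  Set.nonempty_coe_sort.1 h.1.nonempty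

theorem exists_adj_boundary {C X : Set W} (hC : (G.induce C).Connected) {x y : W}
    (hxC : x ∈ C) (hyC : y ∈ C) (hx : x ∈ X) (hy : y ∉ X) :
    ∃ a ∈ C, ∃ b ∈ C, a ∈ X ∧ b ∉ X ∧ G.Adj a b := by
  obtain ⟨p⟩ := hC.preconnected ⟨x, hxC⟩ ⟨y, hyC⟩
  obtain ⟨d, -, h₁, h₂⟩ := p.exists_boundary_dart (Subtype.val ⁻¹' X) hx hy
  exact ⟨d.fst, d.fst.2, d.snd, d.snd.2, h₁, h₂, d.adj⟩

theorem reachable_deleteEdges_of_induce {B : Set W} (hB : (G.induce B).Connected) {e : Sym2 W}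
    {b : W} (hbe : b ∈ e) (hb : b ∉ B) {x y : W} (hx : x ∈ B) (hy : y ∈ B) :
    (G.deleteEdges {e}).Reachable x y := by
  let f : G.induce B →g G.deleteEdges {e} :=
    { toFun := Subtype.val
      map_rel' := by
        rintro ⟨u, hu⟩ ⟨v, hv⟩ huv
        refine (deleteEdges_adj).2 ⟨huv, ?_⟩
        rintro rfl
        rcases Sym2.mem_iff.1 hbe with rfl | rfl <;> contradiction }
  exact (hB.preconnected ⟨x, hx⟩ ⟨y, hy⟩).map f

/-- In an acyclic graph, at most one edge leaves a half. -/
theorem IsAcyclic.boundary_unique (hG : G.IsAcyclic) {B : Set W} (hB : G.IsHalf B) {a b c d : W}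
    (ha : a ∈ B) (hb : b ∉ B) (hab : G.Adj a b) (hc : c ∈ B) (hd : d ∉ B) (hcd : G.Adj c d) :
    a = c ∧ b = d := by
  by_contra hne
  refine isBridge_iff.1 (isAcyclic_iff_forall_adj_isBridge.1 hG hab) ?_
  refine (reachable_deleteEdges_of_induce hB.1 (Sym2.mem_mk_right a b) hb ha hc).trans
    (.trans (Adj.reachable ?_)
      (reachable_deleteEdges_of_induce hB.2 (Sym2.mem_mk_left a b) (by simpa) hd hb))
  refine deleteEdges_adj.2 ⟨hcd, fun h => ?_⟩
  rcases Sym2.eq_iff.1 h with ⟨rfl, rfl⟩ | ⟨rfl, rfl⟩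
  · exact hne ⟨rfl, rfl⟩
  · exact hb hc

/-- The halves of an acyclic graph form a cross-free family. -/
theorem IsAcyclic.isHalf_crossFree (hG : G.IsAcyclic) {B C : Set W} (hB : G.IsHalf B)
    (hC : G.IsHalf C) : B ⊆ C ∨ C ⊆ B ∨ Disjoint B C ∨ Disjoint Bᶜ Cᶜ := by
  by_contra! h
  obtain ⟨h₁, h₂, h₃, h₄⟩ := h
  obtain ⟨p, hpB, hpC⟩ := Set.not_subset.1 h₁
  obtain ⟨q, hqC, hqB⟩ := Set.not_subset.1 h₂
  obtain ⟨r, hrB, hrC⟩ := Set.not_disjoint_iff.1 h₃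
  obtain ⟨s, hsB, hsC⟩ := Set.not_disjoint_iff.1 h₄
  obtain ⟨a, haC, b, -, ha, hb, hab⟩ := exists_adj_boundary hC.1 hrC hqC hrB hqB
  obtain ⟨c, hcC, d, -, hc, hd, hcd⟩ := exists_adj_boundary hC.2 hpC hsC hpB hsB
  obtain ⟨rfl, -⟩ := hG.boundary_unique hB ha hb hab hc hd hcd
  exact hcC haC

theorem connected_induce_insert {C : Set W} (hC : (G.induce C).Connected) {x z : W}
    (hx : x ∈ C) (hxz : G.Adj x z) : (G.induce (insert z C)).Connected := by
  have h := induce_union_connected (induce_pair_connected_of_adj hxz).preconnected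
    hC.preconnected ⟨x, by simp, hx⟩
  rwa [show ({x, z} ∪ C : Set W) = insert z C by grind] at h

/-- In a finite connected graph, disjoint connected vertex sets are separated by a half. -/
theorem Connected.exists_isHalf [Finite W] (hG : G.Connected) {S T : Set W}
    (hS : (G.induce S).Connected) (hT : (G.induce T).Connected) (hST : Disjoint S T) :
    ∃ B, G.IsHalf B ∧ Disjoint S B ∧ T ⊆ B := by
  obtain ⟨B, hTB, ⟨hB, hSB⟩, hBmax⟩ := Set.Finite.exists_le_maximal
    (Set.toFinite {C : Set W | (G.induce C).Connected ∧ Disjoint S C}) (a := T) ⟨hT, hST⟩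
  obtain ⟨A, hSA, ⟨hA, hAB⟩, hAmax⟩ := Set.Finite.exists_le_maximal
    (Set.toFinite {C : Set W | (G.induce C).Connected ∧ Disjoint C B}) (a := S) ⟨hS, hSB⟩
  have hcover : ∀ z, z ∈ A ∪ B := by
    by_contra! hz
    obtain ⟨z, hz⟩ := hz
    obtain ⟨⟨s, hs⟩⟩ := hS.nonempty
    obtain ⟨p⟩ := hG.preconnected s z
    obtain ⟨⟨⟨x, y⟩, hxy⟩, -, hx, hy⟩ := p.exists_boundary_dart (A ∪ B) (Or.inl (hSA hs)) hz
    simp only [Set.mem_union, not_or] at hx hy hxy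
    rcases hx with hx | hx
    · exact hy.1 (hAmax ⟨connected_induce_insert hA hx hxy,
        Set.disjoint_insert_left.2 ⟨hy.2, hAB⟩⟩ (Set.subset_insert y A) (Set.mem_insert y A))
    · exact hy.2 (hBmax ⟨connected_induce_insert hB hx hxy,
        Set.disjoint_insert_right.2 ⟨fun h => hy.1 (hSA h), hSB⟩⟩
        (Set.subset_insert y B) (Set.mem_insert y B))
  have hcompl : Bᶜ = A := by
    ext z
    refine ⟨fun hz => (hcover z).resolve_right hz, fun hz hz' => ?_⟩
    exact Set.disjoint_left.1 hAB hz hz'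
  exact ⟨B, ⟨hB, by rwa [hcompl]⟩, hSB, hTB⟩

theorem connected_induce_singleton (x : W) : (G.induce {x}).Connected :=
  .of_subsingleton

/-- Every half of a finite tree contains a vertex of degree one. -/
theorem IsTree.exists_leaf_mem_isHalf [Finite W] (hG : G.IsTree) {B : Set W} (hB : G.IsHalf B) :
    ∃ w ∈ B, (G.neighborSet w).ncard = 1 := by
  obtain ⟨C, hCB, hC, hCmin⟩ := Set.Finite.exists_le_minimal
    (Set.toFinite {C : Set W | G.IsHalf C}) (a := B) hB
  obtain ⟨x, hx⟩ := hC.nonempty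
  obtain ⟨y, hy⟩ := hC.compl.nonempty
  obtain ⟨p⟩ := hG.connected.preconnected x y
  obtain ⟨⟨⟨b, a⟩, hba⟩, -, hb, ha⟩ := p.exists_boundary_dart C hx hy
  refine ⟨b, hCB hb, Set.ncard_eq_one.2 ⟨a, ?_⟩⟩
  ext c
  refine ⟨fun hbc => ?_, fun h => by rw [Set.mem_singleton_iff.1 h]; exact hba⟩
  by_contra hca
  have hcC : c ∈ C := by
    by_contra hcC
    exact hca (hG.isAcyclic.boundary_unique hC hb hcC hbc hb ha hba).2
  obtain ⟨D, hD, hbD, hcD⟩ := hG.connected.exists_isHalf (connected_induce_singleton b)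
    (connected_induce_singleton c) (Set.disjoint_singleton.2 (Adj.ne hbc))
  rw [Set.disjoint_singleton_left] at hbD
  have hcD' : c ∈ D := hcD rfl
  have hDC : D ⊆ C := by
    intro z hz
    by_contra hzC
    obtain ⟨u, huD, v, -, huC, hvC, huv⟩ := exists_adj_boundary hD.1 hcD' hz hcC hzC
    obtain ⟨rfl, -⟩ := hG.isAcyclic.boundary_unique hC huC hvC huv hb ha hba
    exact hbD huD
  exact hbD (hCmin hD hDC hb)

theorem IsTree.card_le_ncard_leaves [Finite W] (hG : G.IsTree) {A : Finset (Set W)}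
    (hA : ∀ B ∈ A, G.IsHalf B) (hdisj : ∀ B ∈ A, ∀ C ∈ A, B ≠ C → Disjoint B C) :
    A.card ≤ {w | (G.neighborSet w).ncard = 1}.ncard := by
  have := hG.connected.nonempty
  choose! f hf hleaf using fun B (hB : G.IsHalf B) => hG.exists_leaf_mem_isHalf hB
  rw [← Set.ncard_coe_finset]
  refine Set.ncard_le_ncard_of_injOn f (fun B hB => hleaf B (hA B hB)) ?_
  intro B hB C hC hBC
  by_contra hne
  exact Set.disjoint_left.1 (hdisj B hB C hC hne) (hf B (hA B hB)) (hBC ▸ hf C (hA C hC))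

/-- An antichain of halves of a finite tree has at most as many members as the tree has leaves. -/
theorem IsTree.card_antichain_isHalf_le [Finite W] (hG : G.IsTree) {A : Finset (Set W)}
    (hA : ∀ B ∈ A, G.IsHalf B) (hanti : IsAntichain (· ≤ ·) (A : Set (Set W))) :
    A.card ≤ {w | (G.neighborSet w).ncard = 1}.ncard := by
  classical
  have hcross : ∀ B ∈ A, ∀ C ∈ A, B ≠ C → Disjoint B C ∨ Disjoint Bᶜ Cᶜ := by
    intro B hB C hC hne
    rcases hG.isAcyclic.isHalf_crossFree (hA B hB) (hA C hC) with h | h | h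
    · exact (hanti hB hC hne h).elim
    · exact (hanti hC hB hne.symm h).elim
    · exact h
  have htrans : ∀ B ∈ A, ∀ C ∈ A, ∀ D ∈ A, B ≠ C → C ≠ D → B ≠ D →
      Disjoint B C → Disjoint C D := by
    intro B hB C hC D hD hBC hCD hBD h
    refine (hcross C hC D hD hCD).resolve_right fun h' => hanti hB hD hBD ?_
    intro z hz
    by_contra hzD
    exact Set.disjoint_left.1 h' (Set.disjoint_left.1 h hz) hzD
  by_cases hex : ∃ B ∈ A, ∃ C ∈ A, B ≠ C ∧ Disjoint B C
  · obtain ⟨B, hB, C, hC, hBC, h⟩ := hex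
    refine hG.card_le_ncard_leaves hA fun X hX Y hY hXY => ?_
    have key : ∀ Z ∈ A, Z ≠ B → Disjoint B Z := by
      intro Z hZ hZB
      by_cases hZC : Z = C
      · exact hZC ▸ h
      · exact htrans C hC B hB Z hZ hBC.symm hZB.symm (Ne.symm hZC) h.symm
    by_cases hXB : X = B
    · subst hXB
      exact key Y hY hXY.symm
    by_cases hYB : Y = B
    · subst hYB
      exact (key X hX hXY).symm
    exact htrans B hB X hX Y hY (Ne.symm hXB) hXY (Ne.symm hYB) (key X hX hXB)
  · push Not at hex
    rw [← Finset.card_image_of_injective A compl_injective]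
    refine hG.card_le_ncard_leaves ?_ ?_
    · intro B hB
      obtain ⟨C, hC, rfl⟩ := Finset.mem_image.1 hB
      exact (hA C hC).compl
    · intro B hB C hC hne
      obtain ⟨X, hX, rfl⟩ := Finset.mem_image.1 hB
      obtain ⟨Y, hY, rfl⟩ := Finset.mem_image.1 hC
      have hne' : X ≠ Y := fun h => hne (h ▸ rfl)
      exact (hcross X hX Y hY hne').resolve_left (hex X hX Y hY hne')

end SimpleGraph

/-- The complement of a digraph with a subtree representation in a finite tree is a disjoint union
of as many Ferrers digraphs as the tree has leaves. -/
theorem SubtreeRep.exists_disjoint_ferrers {V W : Type} {E : V → V → Prop} [Finite W]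
    {T : SimpleGraph W} (hT : T.IsTree) (R : SubtreeRep E T) {k : ℕ}
    (hk : (treeLeaves T).ncard = k) :
    ∃ F : Fin k → V → V → Prop,
      (∀ i, IsFerrers (F i)) ∧
      (∀ i j, i ≠ j → ∀ u v, ¬ (F i u v ∧ F j u v)) ∧
      (∀ u v, ¬ E u v ↔ ∃ i, F i u v) := by
  classical
  have hfin : {B | T.IsHalf B}.Finite := Set.toFinite _
  obtain ⟨c, hck, hc⟩ := exists_chain_coloring hfin.toFinset k fun A hA hanti =>
    (hT.card_antichain_isHalf_le (fun B hB => by simpa using hA hB) hanti).trans hk.le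
  simp only [Set.Finite.mem_toFinset, Set.mem_ofPred_eq] at hck hc
  let M : V → Set W → Prop := fun u => Maximal fun B => T.IsHalf B ∧ Disjoint (R.src u) B
  have hM : ∀ u B C, M u B → M u C → B = C ∨ Disjoint B C := by
    intro u B C hB hC
    rcases hT.isAcyclic.isHalf_crossFree hB.1.1 hC.1.1 with h | h | h | h
    · exact Or.inl (hB.eq_of_le hC.1 h)
    · exact Or.inl (hC.eq_of_le hB.1 h).symm
    · exact Or.inr h
    · obtain ⟨⟨s, hs⟩⟩ := (R.src_connected u).nonempty
      exact (Set.disjoint_left.1 h (Set.disjoint_left.1 hB.1.2 hs)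
        (Set.disjoint_left.1 hC.1.2 hs)).elim
  refine ⟨fun i u v => ∃ B, M u B ∧ c B = i ∧ R.snk v ⊆ B, ?_, ?_, ?_⟩
  · have mono : ∀ (i : Fin k) (u u' : V) (B C : Set W), M u B → c B = i → M u' C → c C = i →
        B ⊆ C → {v | ∃ B, M u B ∧ c B = i ∧ R.snk v ⊆ B} ⊆
          {v | ∃ B, M u' B ∧ c B = i ∧ R.snk v ⊆ B} := by
      rintro i u u' B C hB hBi hC hCi hBC v ⟨D, hD, hDi, hv⟩
      refine ⟨C, hC, hCi, Set.Subset.trans ?_ hBC⟩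
      obtain rfl | hdisj := hM u B D hB hD
      · exact hv
      · rcases hc B hB.1.1 D hD.1.1 (hBi.trans hDi.symm) with h | h
        · exact (hB.1.1.nonempty.ne_empty (hdisj.eq_bot_of_le h)).elim
        · exact hv.trans h
    intro i u u'
    by_cases hu : ∃ B, M u B ∧ c B = i
    · by_cases hu' : ∃ C, M u' C ∧ c C = i
      · obtain ⟨B, hB, hBi⟩ := hu
        obtain ⟨C, hC, hCi⟩ := hu'
        rcases hc B hB.1.1 C hC.1.1 (hBi.trans hCi.symm) with h | h
        · exact Or.inl (mono i u u' B C hB hBi hC hCi h)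
        · exact Or.inr (mono i u' u C B hC hCi hB hBi h)
      · exact Or.inr fun v ⟨C, hC, hCi, _⟩ => (hu' ⟨C, hC, hCi⟩).elim
    · exact Or.inl fun v ⟨B, hB, hBi, _⟩ => (hu ⟨B, hB, hBi⟩).elim
  · rintro i j hij u v ⟨⟨B, hB, hBi, hvB⟩, ⟨C, hC, hCj, hvC⟩⟩
    obtain ⟨⟨t, ht⟩⟩ := (R.snk_connected v).nonempty
    obtain rfl | h := hM u B C hB hC
    · exact hij (Fin.ext (hBi.symm.trans hCj))
    · exact Set.disjoint_left.1 h (hvB ht) (hvC ht)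
  · intro u v
    rw [R.rep u v, Set.not_nonempty_iff_eq_empty, ← Set.disjoint_iff_inter_eq_empty]
    constructor
    · intro h
      obtain ⟨B, hB, hSB, hvB⟩ :=
        hT.connected.exists_isHalf (R.src_connected u) (R.snk_connected v) h
      obtain ⟨C, hBC, hC⟩ := Set.Finite.exists_le_maximal
        (Set.toFinite {B | T.IsHalf B ∧ Disjoint (R.src u) B}) (a := B) ⟨hB, hSB⟩
      exact ⟨⟨c C, hck C hC.1.1⟩, C, hC, rfl, hvB.trans hBC⟩
    · rintro ⟨i, B, hB, -, hvB⟩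
      exact hB.1.2.mono_right hvB

/-- Every digraph has a subtree representation in a star. -/
theorem nonempty_subtreeRep_starGraph {V : Type} (E : V → V → Prop) :
    Nonempty (SubtreeRep E (SimpleGraph.starGraph (none : Option V))) :=
  ⟨{ src := fun u => {x | ∀ v, x = some v → E u v}
     snk := fun v => {some v}
     src_connected := fun u => by
       refine SimpleGraph.Connected.of_isUniversal (v := ⟨none, by simp⟩) ?_
       rintro ⟨x, hx⟩ hne
       exact SimpleGraph.starGraph_center_adj fun h => hne (Subtype.ext h)
     snk_connected := fun v => SimpleGraph.connected_induce_singleton _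
     rep := fun u v => by simp [Set.inter_nonempty] }⟩

/-- For every digraph `D`, `l(D) ≥ f*(D)`; in particular, whenever `D`
has a subtree representation in a host tree with `k ≥ 3` leaves, the complement of
`D` is the union of `k` pairwise edge-disjoint Ferrers digraphs. -/
theorem stmt_6 {V : Type} [Fintype V] (E : V → V → Prop) :
    fstar E ≤ digLeafage E ∧
    ∀ (k : ℕ) (W : Type) (_ : Fintype W) (T : SimpleGraph W),
      T.IsTree → Nonempty (SubtreeRep E T) → 3 ≤ k → (treeLeaves T).ncard = k →
      ∃ F : Fin k → V → V → Prop,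
        (∀ i, IsFerrers (F i)) ∧
        (∀ i j, i ≠ j → ∀ u v, ¬ (F i u v ∧ F j u v)) ∧
        (∀ u v, ¬ E u v ↔ ∃ i, F i u v) := by
  constructor
  · have hne : {k | ∃ (W : Type) (_ : Fintype W) (T : SimpleGraph W),
        T.IsTree ∧ Nonempty (SubtreeRep E T) ∧ (treeLeaves T).ncard = k}.Nonempty :=
      ⟨_, Option V, inferInstance, SimpleGraph.starGraph none,
        SimpleGraph.isTree_starGraph none, nonempty_subtreeRep_starGraph E, rfl⟩
    obtain ⟨W, _, T, hT, ⟨R⟩, hk⟩ := Nat.sInf_mem hne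
    exact Nat.sInf_le (R.exists_disjoint_ferrers hT hk)
  · rintro k W _ T hT ⟨R⟩ - hk
    exact R.exists_disjoint_ferrers hT hk
end

section
/- For n ≥ 3, let E_n be the digraph on vertices {1, …, n} defined by: for i, j < n, (i,j) ∈ E(E_n) iff i = j; (i,n) ∈ E(E_n) and (n,i) ∈ E(E_n) for all i < n; and (n,n) ∉ E(E_n) (adjacency matrix [[I, Y],[Yᵀ, 0]] with I the (n−1)×(n−1) identity and Y a column of n−1 ones). Then the leafage satisfies l(E_n) = n, while f*(E_n) = f(E_n) = 3. -/
section Tree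

variable {W : Type} {T : SimpleGraph W}

/-- Paths with given endpoints in an acyclic graph are unique. -/
lemma eq_of_isPath (hT : T.IsAcyclic) {x y : W} {p q : T.Walk x y} (hp : p.IsPath)
    (hq : q.IsPath) : p = q :=
  congrArg Subtype.val ((hT.subsingleton_path x y).elim ⟨p, hp⟩ ⟨q, hq⟩)

/-- In an acyclic graph a connected vertex set contains the path between any two of its
vertices. -/
lemma support_subset_of_connected (hT : T.IsAcyclic) {A : Set W} (hA : (T.induce A).Connected)
    {x y : W} (hx : x ∈ A) (hy : y ∈ A) {p : T.Walk x y} (hp : p.IsPath) :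
    ∀ z ∈ p.support, z ∈ A := by
  obtain ⟨q, hq⟩ := hA.exists_isPath ⟨x, hx⟩ ⟨y, hy⟩
  let r := q.map (SimpleGraph.Embedding.induce A).toHom
  have hr : r.IsPath := hq.map Subtype.val_injective
  have hpr : p = r := eq_of_isPath hT hp hr
  intro z hz
  rw [hpr] at hz
  obtain ⟨w, -, rfl⟩ := List.mem_map.1 ((SimpleGraph.Walk.support_map _ q) ▸ hz :)
  exact w.2

/-- Given a vertex `z` and a connected set `B` of a tree, some vertex of `B` lies on every path
from `z` to `B`. -/
lemma exists_gate (hT : T.IsTree) {B : Set W} (hB : (T.induce B).Connected) (z : W) :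
    ∃ w ∈ B, ∀ y ∈ B, ∀ p : T.Walk z y, p.IsPath → w ∈ p.support := by
  classical
  obtain ⟨⟨b, hb⟩⟩ := hB.nonempty
  have hex : ∃ l, ∃ w ∈ B, ∃ q : T.Walk z w, q.length = l :=
    ⟨_, b, hb, (hT.connected.exists_isPath z b).choose, rfl⟩
  obtain ⟨w, hw, q, hq⟩ := Nat.find_spec hex
  have hmin : ∀ v ∈ B, ∀ r : T.Walk z v, q.length ≤ r.length := fun v hv r => by
    rw [hq]; exact Nat.find_min' hex ⟨v, hv, r, rfl⟩
  have honly : ∀ v ∈ q.support, v ∈ B → v = w := fun v hv hvB => by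
    by_contra hne
    exact (hmin v hvB (q.takeUntil v hv)).not_gt
      (SimpleGraph.Walk.length_takeUntil_lt_length hv hne)
  have hqp : q.IsPath := by
    refine (q.isPath_of_length_eq_dist ?_)
    obtain ⟨r, hr⟩ := hT.connected.exists_walk_length_eq_dist z w
    exact le_antisymm (hr ▸ hmin w hw r) (SimpleGraph.dist_le q)
  refine ⟨w, hw, fun y hy p hp => ?_⟩
  obtain ⟨s, hs⟩ := hT.connected.exists_isPath w y
  have hsB := support_subset_of_connected hT.isAcyclic hB hw hy hs
  have hqs : (q.append s).IsPath := by
    rw [SimpleGraph.Walk.isPath_def, SimpleGraph.Walk.support_append, List.nodup_append']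
    have hsn := hs.support_nodup
    rw [← SimpleGraph.Walk.cons_tail_support, List.nodup_cons] at hsn
    refine ⟨hqp.support_nodup, hsn.2, fun v hv hv' => ?_⟩
    have := honly v hv (hsB v (List.mem_of_mem_tail hv'))
    exact hsn.1 (this ▸ hv')
  have hpq : p = q.append s := eq_of_isPath hT.isAcyclic hp hqs
  rw [hpq, SimpleGraph.Walk.mem_support_append_iff]
  exact Or.inl q.end_mem_support

/-- The Helly property for three subtrees of a tree. -/
lemma subtree_helly (hT : T.IsTree) {A B C : Set W} (hA : (T.induce A).Connected)
    (hB : (T.induce B).Connected) (hC : (T.induce C).Connected) (hAB : (A ∩ B).Nonempty)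
    (hBC : (B ∩ C).Nonempty) (hCA : (C ∩ A).Nonempty) : ∃ w, w ∈ A ∧ w ∈ B ∧ w ∈ C := by
  obtain ⟨x, hxA, hxB⟩ := hAB
  obtain ⟨y, hyB, hyC⟩ := hBC
  obtain ⟨z, hzC, hzA⟩ := hCA
  obtain ⟨w, hwB, hw⟩ := exists_gate hT hB z
  obtain ⟨p, hp⟩ := hT.connected.exists_isPath z x
  obtain ⟨q, hq⟩ := hT.connected.exists_isPath z y
  exact ⟨w, support_subset_of_connected hT.isAcyclic hA hzA hxA hp w (hw x hxB p hp), hwB,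
    support_subset_of_connected hT.isAcyclic hC hzC hyC hq w (hw y hyB q hq)⟩

lemma connected_union {A B : Set W} (hA : (T.induce A).Connected) (hB : (T.induce B).Connected)
    (h : (A ∩ B).Nonempty) : (T.induce (A ∪ B)).Connected :=
  SimpleGraph.induce_union_connected hA.preconnected hB.preconnected h

/-- Four subtrees of a tree that meet cyclically have an opposite pair that meets. -/
lemma opposite_meet_of_four (hT : T.IsTree) {A B C D : Set W} (hA : (T.induce A).Connected)
    (hB : (T.induce B).Connected) (hC : (T.induce C).Connected) (hD : (T.induce D).Connected)
    (hAB : (A ∩ B).Nonempty) (hBC : (B ∩ C).Nonempty) (hCD : (C ∩ D).Nonempty)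
    (hDA : (D ∩ A).Nonempty) : (A ∩ C).Nonempty ∨ (B ∩ D).Nonempty := by
  obtain ⟨w, hw, hwC, hwD⟩ := subtree_helly hT (connected_union hA hB hAB) hC hD
    (hBC.mono (by grind)) hCD (hDA.mono (by grind))
  rcases hw with hw | hw
  · exact Or.inl ⟨w, hw, hwC⟩
  · exact Or.inr ⟨w, hw, hwD⟩

/-- Six subtrees of a tree that meet cyclically with opposite pairs disjoint: one of the two
alternating triples has a common vertex. -/
lemma alternating_meet_of_six (hT : T.IsTree) {A B C D E F : Set W}
    (hA : (T.induce A).Connected) (hB : (T.induce B).Connected) (hC : (T.induce C).Connected)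
    (hD : (T.induce D).Connected) (hE : (T.induce E).Connected) (hF : (T.induce F).Connected)
    (hAB : (A ∩ B).Nonempty) (hBC : (B ∩ C).Nonempty) (hCD : (C ∩ D).Nonempty)
    (hDE : (D ∩ E).Nonempty) (hEF : (E ∩ F).Nonempty) (hFA : (F ∩ A).Nonempty)
    (hAD : ¬ (A ∩ D).Nonempty) (hBE : ¬ (B ∩ E).Nonempty) (hCF : ¬ (C ∩ F).Nonempty) :
    (∃ w, w ∈ A ∧ w ∈ C ∧ w ∈ E) ∨ ∃ w, w ∈ B ∧ w ∈ D ∧ w ∈ F := by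
  obtain ⟨w, hAB', hCD', hEF'⟩ := subtree_helly hT (connected_union hA hB hAB)
    (connected_union hC hD hCD) (connected_union hE hF hEF) (hBC.mono (by grind))
    (hDE.mono (by grind)) (hFA.mono (by grind))
  have hAD' : ¬ (w ∈ A ∧ w ∈ D) := fun h => hAD ⟨w, h⟩
  have hBE' : ¬ (w ∈ B ∧ w ∈ E) := fun h => hBE ⟨w, h⟩
  have hCF' : ¬ (w ∈ C ∧ w ∈ F) := fun h => hCF ⟨w, h⟩
  simp only [Set.mem_union] at hAB' hCD' hEF'
  by_cases hwA : w ∈ A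
  · exact Or.inl ⟨w, by tauto⟩
  · exact Or.inr ⟨w, by tauto⟩

/-- A finite tree has a leaf outside every proper subtree. -/
lemma exists_leaf_notMem [Finite W] (hT : T.IsTree) {C : Set W} (hC : (T.induce C).Connected)
    (hne : Cᶜ.Nonempty) : ∃ x ∈ treeLeaves T, x ∉ C := by
  classical
  obtain ⟨⟨r, hr⟩⟩ := hC.nonempty
  obtain ⟨x, hx, hmax⟩ := (Set.toFinite Cᶜ).exists_maximalFor (T.dist r) _ hne
  refine ⟨x, ?_, hx⟩
  have hrx : r ≠ x := fun h => hx (h ▸ hr)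
  obtain ⟨p, hp⟩ := hT.connected.exists_isPath r x
  have hpnil : ¬ p.Nil := SimpleGraph.Walk.not_nil_of_ne hrx
  suffices T.neighborSet x = {p.penultimate} by
    simp [treeLeaves, this]
  ext y
  simp only [SimpleGraph.mem_neighborSet, Set.mem_singleton_iff]
  refine ⟨fun hxy => ?_, fun h => h ▸ (p.adj_penultimate hpnil).symm⟩
  obtain ⟨q, hq⟩ := hT.connected.exists_isPath r y
  by_cases hxq : x ∈ q.support
  · exfalso
    have hy : y ∉ C := fun hy => hx (support_subset_of_connected hT.isAcyclic hC hr hy hq x hxq)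
    obtain ⟨s, hs⟩ := hT.connected.exists_walk_length_eq_dist r y
    have hsq : s = q :=
      eq_of_isPath hT.isAcyclic (s.isPath_of_length_eq_dist hs) hq
    have hlt : T.dist r x < T.dist r y := by
      rw [← hs, hsq]
      exact (SimpleGraph.dist_le _).trans_lt
        (SimpleGraph.Walk.length_takeUntil_lt_length hxq hxy.ne)
    exact hlt.not_ge (hmax hy hlt.le)
  · have hpq : p = q.concat hxy.symm :=
      eq_of_isPath hT.isAcyclic hp (hq.concat hxq hxy.symm)
    rw [hpq, SimpleGraph.Walk.penultimate_concat]

/-- If each member of a family of vertex sets can be avoided by a subtree joining any two other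
members, the tree has at least as many leaves as the family has members. -/
lemma card_le_leaves_of_joined [Finite W] (hT : T.IsTree) {ι : Type} [Fintype ι] [Nontrivial ι]
    (F : ι → Set W) (hF : ∀ i, (F i).Nonempty)
    (hjoin : ∀ i j k, i ≠ k → j ≠ k →
      ∃ A, (T.induce A).Connected ∧ Disjoint A (F k) ∧ F i ⊆ A ∧ F j ⊆ A) :
    Fintype.card ι ≤ (treeLeaves T).ncard := by
  choose o ho using fun k : ι => exists_ne k
  choose z hz using hF
  let S : ι → Set (Set W) := fun k =>
    {A | (T.induce A).Connected ∧ Disjoint A (F k) ∧ z (o k) ∈ A}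
  have hmem : ∀ i k, i ≠ k → F i ⊆ ⋃₀ S k := fun i k hik x hx => by
    obtain ⟨A, hA, hd, hi, hj⟩ := hjoin i (o k) k hik (ho k)
    exact ⟨A, ⟨hA, hd, hj (hz _)⟩, hi hx⟩
  have hconn : ∀ k, (T.induce (⋃₀ S k)).Connected := fun k => by
    refine SimpleGraph.induce_sUnion_connected_of_pairwise_not_disjoint ?_
      (fun hs ht => ⟨z (o k), hs.2.2, ht.2.2⟩) (fun hs => hs.1)
    obtain ⟨A, hA, -⟩ := hmem (o k) k (ho k) (hz _)
    exact ⟨A, hA⟩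
  have hstep : ∀ k x y, x ∈ ⋃₀ S k → T.Adj x y → y ∉ F k → y ∈ ⋃₀ S k := by
    rintro k x y ⟨A, ⟨hA, hd, hzA⟩, hx⟩ hxy hy
    refine ⟨A ∪ {x, y}, ⟨connected_union hA
      (SimpleGraph.induce_pair_connected_of_adj hxy) ⟨x, hx, by simp⟩, ?_, Or.inl hzA⟩, by simp⟩
    rw [Set.disjoint_left] at hd ⊢
    rintro v (hv | rfl | rfl)
    exacts [hd hv, hd hx, hy]
  have hcover : ∀ j k x, j ≠ k → x ∈ ⋃₀ S j ∨ x ∈ ⋃₀ S k := by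
    intro j k x hjk
    obtain ⟨p⟩ := hT.connected.preconnected x (z j)
    generalize hw : z j = w at p
    induction p with
    | nil => exact Or.inr (hmem j k hjk (hw ▸ hz j))
    | @cons u v _ h p ih =>
      by_cases huj : u ∈ F j
      · exact Or.inr (hmem j k hjk huj)
      by_cases huk : u ∈ F k
      · exact Or.inl (hmem k j hjk.symm huk)
      exact (ih hw).imp (fun hv => hstep j v u hv h.symm huj)
        (fun hv => hstep k v u hv h.symm huk)
  have hleaf : ∀ k, ∃ x ∈ treeLeaves T, x ∉ ⋃₀ S k := fun k =>
    exists_leaf_notMem hT (hconn k) ⟨z k, fun ⟨A, hA, hd⟩ =>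
      Set.disjoint_left.1 hA.2.1 hd (hz k)⟩
  choose l hl hlS using hleaf
  have hinj : Function.Injective l := fun j k hjk => by
    by_contra hne
    exact (hcover j k (l j) hne).elim (hlS j) (hjk ▸ hlS k)
  rw [← Nat.card_eq_fintype_card, ← Set.ncard_range_of_injective hinj]
  exact Set.ncard_le_ncard (Set.range_subset_iff.2 hl) (Set.toFinite _)

/-- If the sets `B v` pairwise meet and the traces of the sets `A u` on them form an antichain,
then the host tree has at least as many leaves as there are sets `A u`. -/
lemma card_le_leaves_of_antichain [Finite W] (hT : T.IsTree) {ι κ : Type} [Fintype ι]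
    [Nontrivial ι] (A : ι → Set W) (B : κ → Set W) (hA : ∀ u, (T.induce (A u)).Connected)
    (hB : ∀ v, (T.induce (B v)).Connected) (hmeet : ∀ v v', (B v ∩ B v').Nonempty)
    (hanti : ∀ u k, u ≠ k → ∃ v, (A u ∩ B v).Nonempty ∧ ¬ (A k ∩ B v).Nonempty) :
    Fintype.card ι ≤ (treeLeaves T).ncard := by
  have hdisj : ∀ u k, u ≠ k → Disjoint (A u) (A k) := fun u k huk => by
    obtain ⟨v, huv, hkv⟩ := hanti u k huk
    obtain ⟨w, hkw, huw⟩ := hanti k u huk.symm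
    rw [Set.disjoint_iff_inter_eq_empty, ← Set.not_nonempty_iff_eq_empty]
    intro h
    have := opposite_meet_of_four hT (hA u) (hA k) (hB w) (hB v) h hkw (hmeet w v)
      (Set.inter_comm _ _ ▸ huv)
    tauto
  refine card_le_leaves_of_joined hT A (fun u => Set.nonempty_coe_sort.1 (hA u).nonempty)
    fun i j k hik hjk => ?_
  obtain ⟨v, hiv, hkv⟩ := hanti i k hik
  obtain ⟨w, hjw, hkw⟩ := hanti j k hjk
  rw [Set.not_nonempty_iff_eq_empty, ← Set.disjoint_iff_inter_eq_empty] at hkv hkw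
  refine ⟨(A i ∪ B v) ∪ (A j ∪ B w), connected_union (connected_union (hA i) (hB v) hiv)
    (connected_union (hA j) (hB w) hjw) ((hmeet v w).mono (by grind)), ?_, by grind, by grind⟩
  simp only [Set.disjoint_union_left]
  exact ⟨⟨hdisj i k hik, hkv.symm⟩, hdisj j k hjk, hkw.symm⟩

end Tree

section Ferrers

variable {V : Type}

lemma IsFerrers.exchange {F : V → V → Prop} (hF : IsFerrers F) {u v u' v' : V} (h : F u v)
    (h' : F u' v') : F u v' ∨ F u' v :=
  (hF u u').elim (fun hs => Or.inr (hs h)) (fun hs => Or.inl (hs h'))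

lemma IsFerrers.compl {F : V → V → Prop} (hF : IsFerrers F) :
    IsFerrers fun u v => ¬ F u v :=
  fun u u' => (hF u u').symm.imp (fun h _ hv hv' => hv (h hv')) (fun h _ hv hv' => hv (h hv'))

end Ferrers

/-- The edges of `E_n` in terms of `Fin.last`. -/
lemma enRel_succ_iff {m : ℕ} {i j : Fin (m + 1)} :
    EnRel (m + 1) i j ↔
      (i = j ∧ i ≠ Fin.last m) ∨ (i ≠ Fin.last m ∧ j = Fin.last m) ∨
        (i = Fin.last m ∧ j ≠ Fin.last m) := by
  simp only [EnRel, Fin.ext_iff, Fin.val_last, ne_eq]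
  omega

lemma three_le_of_ferrers_cover {m k : ℕ} (hm : 2 ≤ m)
    {F : Fin k → Fin (m + 1) → Fin (m + 1) → Prop}
    (hF : ∀ i, IsFerrers (F i)) (hcov : ∀ u v, ¬ EnRel (m + 1) u v ↔ ∃ i, F i u v) : 3 ≤ k := by
  let a : Fin (m + 1) := ⟨0, by omega⟩
  let b : Fin (m + 1) := ⟨1, by omega⟩
  have hab : a ≠ b := by simp [a, b]
  have ha : a ≠ Fin.last m := by simp [a, Fin.ext_iff]; omega
  have hb : b ≠ Fin.last m := by simp [b, Fin.ext_iff]; omega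
  have hne : ∀ u v u' v', EnRel (m + 1) u v' → EnRel (m + 1) u' v →
      ∀ i j, F i u v → F j u' v' → i ≠ j := by
    rintro u v u' v' h h' i _ hi hj rfl
    rcases (hF i).exchange hi hj with h1 | h1
    · exact (hcov _ _).2 ⟨i, h1⟩ h
    · exact (hcov _ _).2 ⟨i, h1⟩ h'
  simp only [enRel_succ_iff] at hne hcov
  obtain ⟨x, hx⟩ := (hcov a b).1 (by tauto)
  obtain ⟨y, hy⟩ := (hcov b a).1 (by grind)
  obtain ⟨z, hz⟩ := (hcov (Fin.last m) (Fin.last m)).1 (by tauto)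
  have hxy := hne _ _ _ _ (by tauto) (by tauto) x y hx hy
  have hxz := hne _ _ _ _ (by tauto) (by tauto) x z hx hz
  have hyz := hne _ _ _ _ (by tauto) (by tauto) y z hy hz
  omega

/-- The nonedges of `E_n`, split into those above the diagonal, those below it, and the last
loop. -/
def enComplPart (m : ℕ) : Fin 3 → Fin (m + 1) → Fin (m + 1) → Prop :=
  ![fun u v => u < v ∧ v < Fin.last m, fun u v => v < u ∧ u < Fin.last m,
    fun u v => u = Fin.last m ∧ v = Fin.last m]

lemma isFerrers_enComplPart (m : ℕ) (i : Fin 3) : IsFerrers (enComplPart m i) := by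
  intro u u'
  simp only [Set.subset_def, Set.mem_ofPred_eq]
  fin_cases i <;> simp only [enComplPart, Fin.lt_def, Fin.ext_iff, Fin.val_last] <;>
    simp <;> grind

lemma enComplPart_disjoint (m : ℕ) (i j : Fin 3) (hij : i ≠ j) (u v : Fin (m + 1)) :
    ¬ (enComplPart m i u v ∧ enComplPart m j u v) := by
  fin_cases i <;> fin_cases j <;> simp [enComplPart] at hij ⊢ <;> grind

lemma enComplPart_cover (m : ℕ) (u v : Fin (m + 1)) :
    ¬ EnRel (m + 1) u v ↔ ∃ i, enComplPart m i u v := by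
  simp only [Fin.exists_fin_succ, enRel_succ_iff, enComplPart]
  simp [Fin.ext_iff, -Fin.val_fin_lt, Fin.lt_def]
  omega

lemma fstar_enRel {m : ℕ} (hm : 2 ≤ m) : fstar (EnRel (m + 1)) = 3 := by
  have h3 : 3 ∈ {k | ∃ F : Fin k → Fin (m + 1) → Fin (m + 1) → Prop, (∀ i, IsFerrers (F i)) ∧
      (∀ i j, i ≠ j → ∀ u v, ¬ (F i u v ∧ F j u v)) ∧
      (∀ u v, ¬ EnRel (m + 1) u v ↔ ∃ i, F i u v)} :=
    ⟨enComplPart m, isFerrers_enComplPart m, enComplPart_disjoint m, enComplPart_cover m⟩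
  refine le_antisymm (Nat.sInf_le h3) (le_csInf ⟨3, h3⟩ ?_)
  rintro k ⟨F, hF, -, hcov⟩
  exact three_le_of_ferrers_cover hm hF hcov

lemma ferrersDim_enRel {m : ℕ} (hm : 2 ≤ m) : ferrersDim (EnRel (m + 1)) = 3 := by
  have h3 : 3 ∈ {k | ∃ F : Fin k → Fin (m + 1) → Fin (m + 1) → Prop, (∀ i, IsFerrers (F i)) ∧
      (∀ u v, EnRel (m + 1) u v ↔ ∀ i, F i u v)} :=
    ⟨fun i u v => ¬ enComplPart m i u v, fun i => (isFerrers_enComplPart m i).compl,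
      fun u v => by rw [← not_exists, ← enComplPart_cover, not_not]⟩
  refine le_antisymm (Nat.sInf_le h3) (le_csInf ⟨3, h3⟩ ?_)
  rintro k ⟨F, hF, hcov⟩
  exact three_le_of_ferrers_cover hm (F := fun i u v => ¬ F i u v) (fun i => (hF i).compl)
    fun u v => by rw [hcov, not_forall]

/-- Every host tree of a subtree representation of `E_n` has at least `n` leaves. -/
lemma SubtreeRep.le_leaves {m : ℕ} (hm : 2 ≤ m) {W : Type} [Finite W] {T : SimpleGraph W}
    (hT : T.IsTree) (R : SubtreeRep (EnRel (m + 1)) T) : m + 1 ≤ (treeLeaves T).ncard := by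
  obtain ⟨S, Q, hS, hQ, hrep⟩ := R
  simp only [enRel_succ_iff] at hrep
  have : Nontrivial (Fin (m + 1)) := Fin.nontrivial_iff_two_le.2 (by omega)
  have hthird : ∀ i j : Fin (m + 1), ∃ l, l ≠ i ∧ l ≠ j := fun i j => by
    obtain ⟨l, hl⟩ := Finset.exists_mem_notMem_of_card_lt_card
      (s := {i, j}) (t := (Finset.univ : Finset (Fin (m + 1))))
      ((Finset.card_le_two).trans_lt (by simp; omega))
    exact ⟨l, by simpa using hl⟩
  have hSne : ∀ u, (S u).Nonempty := fun u => Set.nonempty_coe_sort.1 (hS u).nonempty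
  have hQne : ∀ u, (Q u).Nonempty := fun u => Set.nonempty_coe_sort.1 (hQ u).nonempty
  have hpair : ∀ i j, i ≠ j → i ≠ Fin.last m → j ≠ Fin.last m →
      (∃ w, w ∈ S i ∧ w ∈ S j ∧ w ∈ S (Fin.last m)) ∨
        ∃ w, w ∈ Q (Fin.last m) ∧ w ∈ Q j ∧ w ∈ Q i := by
    intro i j hij hi hj
    refine alternating_meet_of_six hT (hS i) (hQ _) (hS j) (hQ j) (hS _) (hQ i)
      ((hrep _ _).1 ?_) (Set.inter_comm _ _ ▸ (hrep _ _).1 ?_) ((hrep _ _).1 ?_)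
      (Set.inter_comm _ _ ▸ (hrep _ _).1 ?_) ((hrep _ _).1 ?_)
      (Set.inter_comm _ _ ▸ (hrep _ _).1 ?_) (mt (hrep _ _).2 ?_)
      (Set.inter_comm _ _ ▸ mt (hrep _ _).2 ?_) (mt (hrep _ _).2 ?_)
    all_goals grind
  have hdich : (∀ u v, (Q u ∩ Q v).Nonempty) ∨ ∀ u v, (S u ∩ S v).Nonempty := by
    have hall : ∀ X : Fin (m + 1) → Set W, (∀ u, (X u).Nonempty) →
        (∀ i j, i ≠ j → i ≠ Fin.last m → j ≠ Fin.last m →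
          ∃ w, w ∈ X i ∧ w ∈ X j ∧ w ∈ X (Fin.last m)) → ∀ u v, (X u ∩ X v).Nonempty := by
      intro X hX hXp u v
      rcases eq_or_ne u v with rfl | huv
      · simpa using hX u
      obtain ⟨l, hl, hl'⟩ := hthird (if u = Fin.last m then v else u) (Fin.last m)
      by_cases hu : u = Fin.last m
      · obtain ⟨w, hw⟩ := hXp v l (by grind) (by grind) hl'
        exact ⟨w, hu ▸ hw.2.2, hw.1⟩
      by_cases hv : v = Fin.last m
      · obtain ⟨w, hw⟩ := hXp u l (by grind) hu hl'
        exact ⟨w, hw.1, hv ▸ hw.2.2⟩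
      obtain ⟨w, hw⟩ := hXp u v huv hu hv
      exact ⟨w, hw.1, hw.2.1⟩
    by_cases hex : ∃ i, i ≠ Fin.last m ∧ (S i ∩ S (Fin.last m)).Nonempty
    · obtain ⟨i, hi, hiS⟩ := hex
      have hno : ∀ j, j ≠ i → j ≠ Fin.last m → ¬ (Q j ∩ Q (Fin.last m)).Nonempty := by
        intro j hji hj hjQ
        have h := opposite_meet_of_four hT (hS i) (hS _) (hQ j) (hQ _) hiS
          ((hrep _ _).1 (by tauto)) hjQ (Set.inter_comm _ _ ▸ (hrep _ _).1 (by tauto))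
        rw [← hrep, ← hrep] at h
        grind
      refine Or.inr (hall S hSne fun j k hjk hj hk => (hpair j k hjk hj hk).resolve_right ?_)
      rintro ⟨w, hw, hwk, hwj⟩
      by_cases hji : j = i
      · exact hno k (by grind) hk ⟨w, hwk, hw⟩
      · exact hno j hji hj ⟨w, hwj, hw⟩
    · refine Or.inl (hall Q hQne fun j k hjk hj hk => ?_)
      obtain ⟨w, hw⟩ := (hpair j k hjk hj hk).resolve_left
        fun ⟨w, hwj, _, hw⟩ => hex ⟨j, hj, w, hwj, hw⟩
      exact ⟨w, by tauto⟩
  have hanti : ∀ u k : Fin (m + 1), u ≠ k → ∃ v,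
      (EnRel (m + 1) u v ∧ ¬ EnRel (m + 1) k v) ∧ EnRel (m + 1) v u ∧ ¬ EnRel (m + 1) v k := by
    intro u k huk
    simp only [enRel_succ_iff]
    obtain ⟨l, hl, hl'⟩ := hthird k (Fin.last m)
    by_cases hk : k = Fin.last m
    · exact ⟨Fin.last m, by grind⟩
    by_cases hu : u = Fin.last m
    · exact ⟨l, by grind⟩
    · exact ⟨u, by grind⟩
  simp only [enRel_succ_iff, hrep] at hanti
  rw [← Fintype.card_fin (m + 1)]
  rcases hdich with h | h
  · refine card_le_leaves_of_antichain hT S Q hS hQ h fun u k huk => ?_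
    obtain ⟨v, hv, -⟩ := hanti u k huk
    exact ⟨v, hv⟩
  · refine card_le_leaves_of_antichain hT Q S hQ hS h fun u k huk => ?_
    obtain ⟨v, -, hv⟩ := hanti u k huk
    exact ⟨v, by rwa [Set.inter_comm, Set.inter_comm (Q k)]⟩

lemma connected_induce_star_of_center_mem {V : Type} {r : V} {A : Set V} (h : r ∈ A) :
    ((SimpleGraph.starGraph r).induce A).Connected := by
  refine SimpleGraph.Connected.of_isUniversal (v := ⟨r, h⟩) ?_
  intro x hx
  simpa [Subtype.ext_iff] using hx

lemma connected_induce_singleton {V : Type} (G : SimpleGraph V) (x : V) :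
    (G.induce {x}).Connected := by
  rw [SimpleGraph.induce_singleton_eq_top]
  exact SimpleGraph.connected_top

/-- `E_n` is represented by subtrees of a star with `n` leaves. -/
lemma nonempty_subtreeRep_star (m : ℕ) :
    Nonempty (SubtreeRep (EnRel (m + 1))
      (SimpleGraph.starGraph (none : Option (Fin (m + 1))))) := by
  refine ⟨⟨fun i => if i = Fin.last m then {some (Fin.last m)}ᶜ
      else {none, some i, some (Fin.last m)}, fun i => {some i}, fun i => ?_,
    fun i => connected_induce_singleton _ _, fun i j => ?_⟩⟩
  · apply connected_induce_star_of_center_mem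
    split_ifs <;> simp
  · rw [enRel_succ_iff, Set.inter_singleton_nonempty]
    split_ifs <;> simp <;> grind

lemma ncard_treeLeaves_star {n : ℕ} (hn : 2 ≤ n) :
    (treeLeaves (SimpleGraph.starGraph (none : Option (Fin n)))).ncard = n := by
  have h : treeLeaves (SimpleGraph.starGraph (none : Option (Fin n))) = Set.range some := by
    ext x
    cases x with
    | none =>
      have : (SimpleGraph.starGraph (none : Option (Fin n))).neighborSet none = Set.range some := by
        ext y; cases y <;> simp
      simp only [treeLeaves, Set.mem_ofPred_eq, this,
        Set.ncard_range_of_injective (Option.some_injective _)]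
      simp; omega
    | some i =>
      have : (SimpleGraph.starGraph (none : Option (Fin n))).neighborSet (some i) = {none} := by
        ext y; cases y <;> simp
      simp [treeLeaves, this]
  rw [h, Set.ncard_range_of_injective (Option.some_injective _), Nat.card_eq_fintype_card,
    Fintype.card_fin]

lemma digLeafage_enRel {m : ℕ} (hm : 2 ≤ m) : digLeafage (EnRel (m + 1)) = m + 1 := by
  have hmem : m + 1 ∈ {k | ∃ (W : Type) (_ : Fintype W) (T : SimpleGraph W),
      T.IsTree ∧ Nonempty (SubtreeRep (EnRel (m + 1)) T) ∧ (treeLeaves T).ncard = k} :=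
    ⟨_, inferInstance, _, SimpleGraph.isTree_starGraph none, nonempty_subtreeRep_star m,
      ncard_treeLeaves_star (by omega)⟩
  refine le_antisymm (Nat.sInf_le hmem) (le_csInf ⟨_, hmem⟩ ?_)
  rintro k ⟨W, _, T, hT, ⟨R⟩, rfl⟩
  exact R.le_leaves hm hT

/-- For `n ≥ 3`, the digraph `E_n` with adjacency matrix
`[[I, Y], [Yᵀ, 0]]` satisfies `l(E_n) = n` and `f*(E_n) = f(E_n) = 3`. -/
theorem stmt_7 (n : ℕ) (hn : 3 ≤ n) :
    digLeafage (EnRel n) = n ∧ fstar (EnRel n) = 3 ∧ ferrersDim (EnRel n) = 3 := by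
  obtain ⟨m, rfl⟩ : ∃ m, n = m + 1 := ⟨n - 1, by omega⟩
  have hm : 2 ≤ m := by omega
  exact ⟨digLeafage_enRel hm, fstar_enRel hm, ferrersDim_enRel hm⟩
end
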